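/- arXiv:1302.3024 — 2 statements merged into one kernel-verified Lean document; each statement's English description precedes it below -/
import Mathlib

section
/- Let f, Γ, f̂, h be as produced by the blow-up construction of Theorem 4.1 for a quasiperiodically forced increasing interval map f with invariant curve Γ. Then h^{-1}(Γ) is homeomorphic to the circle T¹; more precisely, there is a homeomorphism ξ : T¹ → h^{-1}(Γ) conjugating the restriction f̂|_{h^{-1}(Γ)} to a circle homeomorphism of Denjoy type (a circle homeomorphism with irrational rotation number and a wandering open interval). -/
open Set Function MeasureTheory

noncomputable section

/-- The circle `T¹ = ℝ/ℤ`. -/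
abbrev T1 := AddCircle (1 : ℝ)

/-- The `n`-th iterate (`n ∈ ℤ`) of a bijection. -/
def zIter {X : Type*} (g : Equiv.Perm X) (n : ℤ) : X → X := fun x => (g ^ n) x

/-- A set of integers is syndetic if it has bounded gaps. -/
def ZSyndetic (S : Set ℤ) : Prop := ∃ N : ℕ, ∀ n : ℤ, ∃ k ∈ S, |k - n| ≤ (N : ℤ)

/-- A homeomorphism `α` of a metric space is almost periodic if for every `ε > 0` the set
`{n ∈ ℤ | dist(αⁿ, Id) < ε}` is syndetic. -/
def AlmostPeriodicHomeo {Θ : Type*} [MetricSpace Θ] (α : Θ ≃ₜ Θ) : Prop :=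
  ∀ ε > (0 : ℝ), ZSyndetic {n : ℤ | ∀ θ : Θ, dist (zIter α.toEquiv n θ) θ < ε}

/-- A homeomorphism is minimal if every (two-sided) orbit is dense. -/
def MinimalHomeo {Θ : Type*} [TopologicalSpace Θ] (α : Θ ≃ₜ Θ) : Prop :=
  ∀ θ : Θ, Dense (range fun n : ℤ => zIter α.toEquiv n θ)

/-- A self-map `g` of a metric space is almost periodic if its family of iterates
is (uniformly) equicontinuous. -/
def AlmostPeriodicMap {Y : Type*} [MetricSpace Y] (g : Y → Y) : Prop :=
  ∀ ε > (0 : ℝ), ∃ δ > (0 : ℝ), ∀ y y' : Y, dist y y' < δ → ∀ n : ℕ, dist (g^[n] y) (g^[n] y') < ε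

/-- `h` is a factor map (semiconjugacy) from `(X, f)` onto `(Y, g)`:
a continuous surjection with `h ∘ f = g ∘ h`.  Then `(X, f)` is a topological
extension of `(Y, g)`. -/
def IsFactorMap {X Y : Type*} [TopologicalSpace X] [TopologicalSpace Y]
    (f : X → X) (g : Y → Y) (h : X → Y) : Prop :=
  Continuous h ∧ Surjective h ∧ h ∘ f = g ∘ h

/-- A map `h` is almost 1-1 if the set of points of the target having exactly one
preimage is dense. -/
def AlmostOneOne {X Y : Type*} [TopologicalSpace Y] (h : X → Y) : Prop :=
  Dense {y : Y | ∃! x, h x = y}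

/-- A witness that the system `(X, f)` is almost automorphic: an almost periodic
homeomorphism of a compact metric space which is an almost 1-1 factor of `(X, f)`. -/
structure AAWitness {X : Type*} [TopologicalSpace X] (f : X → X) where
  (Y : Type)
  [mY : MetricSpace Y]
  [cY : CompactSpace Y]
  (g : Y ≃ₜ Y)
  (hmap : X → Y)
  (factor : IsFactorMap f (⇑g) hmap)
  (a11 : AlmostOneOne hmap)
  (ap : ∀ ε > (0 : ℝ), ∃ δ > (0 : ℝ), ∀ y y' : Y, dist y y' < δ →
        ∀ n : ℤ, dist (zIter g.toEquiv n y) (zIter g.toEquiv n y') < ε)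

/-- `M` is a minimal set of `f`: nonempty, closed, invariant, and without proper
nonempty closed invariant subsets. -/
def IsMinimalSet {X : Type*} [TopologicalSpace X] (f : X → X) (M : Set X) : Prop :=
  M.Nonempty ∧ IsClosed M ∧ f '' M = M ∧
    ∀ M' ⊆ M, M'.Nonempty → IsClosed M' → f '' M' ⊆ M' → M' = M

/-- The restriction of `f` to an invariant set. -/
def restrictMap {X : Type*} {f : X → X} {M : Set X} (hM : Set.MapsTo f M M) : ↥M → ↥M :=
  Set.MapsTo.restrict f M M hM

/-- `M` is an almost automorphic minimal set of `f`: `f` restricted to `M` admits an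
almost periodic almost 1-1 factor. -/
def IsAAMinimal {X : Type*} [MetricSpace X] (f : X → X) (M : Set X) : Prop :=
  IsMinimalSet f M ∧ ∀ hM : Set.MapsTo f M M, Nonempty (AAWitness (restrictMap hM))

/-- `M` is an almost periodic minimal set of `f`: the family of iterates of the
restriction of `f` to `M` is equicontinuous. -/
def IsAPMinimal {X : Type*} [MetricSpace X] (f : X → X) (M : Set X) : Prop :=
  IsMinimalSet f M ∧ ∀ hM : Set.MapsTo f M M, AlmostPeriodicMap (restrictMap hM)

/-- A subset of a product is pinched if some fibre is a singleton. -/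
def Pinched {Θ X : Type*} (A : Set (Θ × X)) : Prop := ∃ θ : Θ, ∃! x : X, (θ, x) ∈ A

/-- An `α`-forced increasing interval map on `Θ × I`: a continuous skew product over `α`
whose fibre maps are strictly increasing. -/
def ForcedIncreasing {Θ : Type*} [TopologicalSpace Θ] {I : Set ℝ} (α : Θ → Θ)
    (f : Θ × ↥I → Θ × ↥I) : Prop :=
  Continuous f ∧ (∀ p : Θ × ↥I, (f p).1 = α p.1) ∧
    ∀ θ : Θ, StrictMono fun x : ↥I => (f (θ, x)).2

/-- The fibre of `M ⊆ Θ × I` over `θ`, as a set of reals. -/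
def fiberSet {Θ : Type*} {I : Set ℝ} (M : Set (Θ × ↥I)) (θ : Θ) : Set ℝ :=
  (fun x : ↥I => (x : ℝ)) '' {x : ↥I | (θ, x) ∈ M}

/-- The filled-in envelope `[φ⁻_M, φ⁺_M]` of `M`, where `φ⁻_M(θ) = inf M_θ` and
`φ⁺_M(θ) = sup M_θ`. -/
def FilledEnvelope {Θ : Type*} {I : Set ℝ} (M : Set (Θ × ↥I)) : Set (Θ × ↥I) :=
  {p : Θ × ↥I | sInf (fiberSet M p.1) ≤ (p.2 : ℝ) ∧ (p.2 : ℝ) ≤ sSup (fiberSet M p.1)}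

/-- The graph of a curve `γ : Θ → I`. -/
def curveGraph {Θ : Type*} {I : Set ℝ} (γ : Θ → ↥I) : Set (Θ × ↥I) :=
  {p : Θ × ↥I | p.2 = γ p.1}

/-- The conclusion of the blow-up construction (properties (i)-(v) of the main theorem):
`f̂` is a topological extension of `f` via the fibre-respecting factor map `h`, `f̂` is an
`α`-forced increasing interval map, the fibre maps of `h` are non-decreasing, `h` is
injective off `h⁻¹(Γ)`, countably many points of `Γ` have non-degenerate vertical-segment
preimages while all other points of `Γ` have singleton preimages, and `h⁻¹(Γ)` contains
the graph of no continuous curve. -/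
def BlowUpConclusion {Θ : Type*} [TopologicalSpace Θ] {I : Set ℝ}
    (α : Θ → Θ) (f : Θ × ↥I → Θ × ↥I) (γ : Θ → ↥I)
    (fhat : Θ × ↥I → Θ × ↥I) (h : Θ × ↥I → Θ × ↥I) : Prop :=
  IsFactorMap fhat f h ∧ (∀ p : Θ × ↥I, (h p).1 = p.1) ∧
  ForcedIncreasing α fhat ∧
  (∀ θ : Θ, Monotone fun x : ↥I => (h (θ, x)).2) ∧
  Set.InjOn h (h ⁻¹' curveGraph γ)ᶜ ∧
  (∃ C : Set (Θ × ↥I), C ⊆ curveGraph γ ∧ C.Countable ∧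
    (∀ p ∈ C, ∃ x₁ x₂ : ↥I, x₁ < x₂ ∧ h ⁻¹' {p} = {p.1} ×ˢ Set.Icc x₁ x₂) ∧
    (∀ p ∈ curveGraph γ \ C, ∃ x : ↥I, h ⁻¹' {p} = {(p.1, x)})) ∧
  (∀ η : Θ → ↥I, Continuous η → ¬ (curveGraph η ⊆ h ⁻¹' curveGraph γ))


/-- The identification of `T¹` with `[0,1)`. -/
def lift1 : T1 → ℝ := fun x => ((AddCircle.equivIco 1 0 x : ↥(Set.Ico (0:ℝ) (0+1))) : ℝ)

/-- A circle homeomorphism is of Denjoy type if it has irrational rotation number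
(witnessed by a monotone degree-one lift) and a wandering open interval (arc). -/
def DenjoyType (f : T1 ≃ₜ T1) : Prop :=
  (∃ F : CircleDeg1Lift, (∀ t : ℝ, ((F t : ℝ) : T1) = f ((t : ℝ) : T1)) ∧
      Irrational F.translationNumber) ∧
  ∃ a b : ℝ, a < b ∧ b < a + 1 ∧
    ∀ m n : ℤ, m ≠ n →
      Disjoint (zIter f.toEquiv m '' ((fun t : ℝ => ((t : ℝ) : T1)) '' Set.Ioo a b))
               (zIter f.toEquiv n '' ((fun t : ℝ => ((t : ℝ) : T1)) '' Set.Ioo a b))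

/-!
Let `c n = n • ρ`. Attach to every point `p` of the strip the ratios `above n p : below n p`, where
`above n` and `below n` are nonnegative continuous functions vanishing simultaneously only at the
point of the curve over `c n`. There the `n`-th ratio is indeterminate, and letting it take every
value in `[0, 1]` blows the point up to a segment. Along the curve the `n`-th ratio is a sawtooth
that jumps from `0` to `1` at `c n`, so the blown-up curve is Denjoy's blow-up of an orbit of the
rotation, and no continuous curve can pass through it.

The functions are carried into each other by `f`, so that `f` lifts to the blow-up. Away from the
curve they are built from heights, that is, from the signed vertical distance to the curve at time
`-n`, and for this `f` has to be extended to an invertible map of `T1 × ℝ`. Finally the ratios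
increase along the fibres, and shearing the vertical coordinate upwards by a summable weighted sum
of them identifies the blow-up with the strip itself. In the same way
`θ ↦ θ + ∑ n, weight n * τ n` identifies the blown-up circle with the circle.
-/

/-! ### Ratios with an indeterminate value -/

/-- `t : (1 - t) = p : q`, that is `t = p / (p + q)`. Clearing denominators leaves `t` unconstrained
when `p = q = 0`, and it is this freedom that creates the blown-up segments. -/
def IsRatio (t : unitInterval) (p q : ℝ) : Prop := (t : ℝ) * q = (1 - t) * p

lemma IsRatio.eq {t t' : unitInterval} {p q : ℝ} (h : IsRatio t p q) (h' : IsRatio t' p q)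
    (hpq : p + q ≠ 0) : t = t' := by
  unfold IsRatio at h h'
  exact Subtype.ext (mul_right_cancel₀ hpq (by linarith))

lemma IsRatio.le {t t' : unitInterval} {p q p' q' : ℝ} (h : IsRatio t p q)
    (h' : IsRatio t' p' q') (hp₀ : 0 ≤ p) (hq₀ : 0 ≤ q') (hp : p ≤ p') (hq : q' ≤ q)
    (hlt : p - q < p' - q') : t ≤ t' := by
  unfold IsRatio at h h'
  by_contra! hlt'
  have htt : (t' : ℝ) < t := hlt'
  have ht' : 0 < 1 - (t' : ℝ) := by linarith [t.2.2]
  have ht : 0 < (t : ℝ) := by linarith [t'.2.1]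
  have hsum : (1 - (t' : ℝ)) * (p' - p) + (t - t') * p + t * (q - q') + (t - t') * q' = 0 := by
    linarith
  have h₁ : 0 ≤ (1 - (t' : ℝ)) * (p' - p) := mul_nonneg ht'.le (sub_nonneg.2 hp)
  have h₂ : 0 ≤ ((t : ℝ) - t') * p := mul_nonneg (sub_nonneg.2 htt.le) hp₀
  have h₃ : 0 ≤ (t : ℝ) * (q - q') := mul_nonneg ht.le (sub_nonneg.2 hq)
  have h₄ : 0 ≤ ((t : ℝ) - t') * q' := mul_nonneg (sub_nonneg.2 htt.le) hq₀
  have hp' : p' - p = 0 := (mul_eq_zero.1 (by linarith [hsum])).resolve_left ht'.ne'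
  have hq' : q - q' = 0 := (mul_eq_zero.1 (by linarith [hsum])).resolve_left ht.ne'
  linarith

lemma exists_isRatio {p q : ℝ} (hp : 0 ≤ p) (hq : 0 ≤ q) : ∃ t, IsRatio t p q := by
  rcases (add_nonneg hp hq).eq_or_lt with h | h
  · exact ⟨0, by simp only [IsRatio, Icc.coe_zero]; linarith⟩
  · refine ⟨⟨p / (p + q), div_nonneg hp h.le, (div_le_one h).2 (by linarith)⟩, ?_⟩
    simp only [IsRatio]
    field_simp
    ring

lemma isPreconnected_setOf_isRatio (p q : ℝ) : IsPreconnected {t | IsRatio t p q} := by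
  by_cases hpq : p + q = 0
  · obtain rfl : q = -p := by linarith
    by_cases hp : p = 0
    · simpa [hp, IsRatio] using isPreconnected_univ
    · convert isPreconnected_empty using 1
      ext t
      simp only [IsRatio, mem_ofPred_eq, mem_empty_iff_false, iff_false]
      exact fun h => hp (by linarith)
  · exact Subsingleton.isPreconnected fun t ht t' ht' => IsRatio.eq ht ht' hpq

/-- The blow-up of `A` along the common zeros of the pairs `p i, q i`: the points of `A` together
with values of all the ratios `p i / (p i + q i)`, indeterminate ones included. -/
def ratioBlowUp {ι A : Type*} (p q : ι → A → ℝ) : Set (A × (ι → unitInterval)) :=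
  {e | ∀ i, IsRatio (e.2 i) (p i e.1) (q i e.1)}

lemma le_total_of_subsingleton_ne {ι α : Type*} [LinearOrder α] {x y : ι → α}
    (h : {i | x i ≠ y i}.Subsingleton) : x ≤ y ∨ y ≤ x := by
  refine or_iff_not_imp_left.2 fun hxy j => ?_
  obtain ⟨i, hi⟩ := not_forall.1 hxy
  by_cases hj : x j = y j
  · exact hj.ge
  · rw [h hj fun hi' => hi hi'.le]
    exact (not_le.1 hi).le

namespace ratioBlowUp

variable {ι κ A B : Type*} {p q : ι → A → ℝ} {p' q' : κ → B → ℝ}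

lemma exists_mem (hp : ∀ i x, 0 ≤ p i x) (hq : ∀ i x, 0 ≤ q i x) (x : A) :
    ∃ τ, (x, τ) ∈ ratioBlowUp p q := by
  choose τ hτ using fun i => exists_isRatio (hp i x) (hq i x)
  exact ⟨τ, hτ⟩

lemma update_mem [DecidableEq ι] {x : A} {τ : ι → unitInterval} (h : (x, τ) ∈ ratioBlowUp p q)
    {i : ι} (hp : p i x = 0) (hq : q i x = 0) (r : unitInterval) :
    (x, update τ i r) ∈ ratioBlowUp p q := by
  intro j
  rcases eq_or_ne j i with rfl | hj
  · simp [IsRatio, hp, hq]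
  · simpa [hj] using h j

lemma snd_le_total {e e' : ratioBlowUp p q} (h : e.1.1 = e'.1.1)
    (hs : {i | p i e.1.1 + q i e.1.1 = 0}.Subsingleton) : e.1.2 ≤ e'.1.2 ∨ e'.1.2 ≤ e.1.2 := by
  refine le_total_of_subsingleton_ne (hs.anti fun i hi => ?_)
  by_contra hpq
  exact hi ((e.2 i).eq (h ▸ e'.2 i) hpq)

lemma eq_of_fst_eq {e e' : ratioBlowUp p q} (h : e.1.1 = e'.1.1)
    (hpq : ∀ i, p i e.1.1 + q i e.1.1 ≠ 0) : e = e' :=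
  Subtype.ext (Prod.ext h (funext fun i => (e.2 i).eq (h ▸ e'.2 i) (hpq i)))

/-- The map of blow-ups that covers `g` and reindexes the ratios by `σ`. -/
def map (g : A → B) (σ : ι ≃ κ) (hp : ∀ i x, p' (σ i) (g x) = p i x)
    (hq : ∀ i x, q' (σ i) (g x) = q i x) (e : ratioBlowUp p q) : ratioBlowUp p' q' :=
  ⟨(g e.1.1, e.1.2 ∘ σ.symm), σ.forall_congr_right.1 fun i => by
    simpa only [hp, hq, comp_apply, Equiv.symm_apply_apply] using e.2 i⟩

section Topology

variable [TopologicalSpace A] [TopologicalSpace B]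

lemma continuous_map {g : A → B} (hg : Continuous g) (σ : ι ≃ κ)
    (hp : ∀ i x, p' (σ i) (g x) = p i x) (hq : ∀ i x, q' (σ i) (g x) = q i x) :
    Continuous (map g σ hp hq) := by
  unfold map comp
  fun_prop

/-- `ratioBlowUp.map` as a homeomorphism, when it covers a homeomorphism. -/
def mapHomeomorph (g : A ≃ₜ B) (σ : ι ≃ κ) (hp : ∀ i x, p' (σ i) (g x) = p i x)
    (hq : ∀ i x, q' (σ i) (g x) = q i x) : ratioBlowUp p q ≃ₜ ratioBlowUp p' q' where
  toFun := map g σ hp hq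
  invFun := map g.symm σ.symm (fun j y => by simp [← hp]) fun j y => by simp [← hq]
  left_inv e := by simp [map, comp_assoc]
  right_inv e := by simp [map, comp_assoc]
  continuous_toFun := continuous_map g.continuous σ hp hq
  continuous_invFun := continuous_map g.symm.continuous σ.symm _ _

variable (hpc : ∀ i, Continuous (p i)) (hqc : ∀ i, Continuous (q i))

include hpc hqc

lemma isClosed : IsClosed (ratioBlowUp p q) := by
  simp only [ratioBlowUp, IsRatio, ofPred_forall]
  refine isClosed_iInter fun i => isClosed_eq ?_ ?_
  · have := hqc i
    fun_prop
  · have := hpc i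
    fun_prop

lemma compactSpace [CompactSpace A] : CompactSpace (ratioBlowUp p q) :=
  isCompact_iff_compactSpace.1 (isClosed hpc hqc).isCompact

lemma connectedSpace [CompactSpace A] [T2Space A] [ConnectedSpace A]
    (hp : ∀ i x, 0 ≤ p i x) (hq : ∀ i x, 0 ≤ q i x) : ConnectedSpace (ratioBlowUp p q) := by
  have := compactSpace hpc hqc
  let π : ratioBlowUp p q → A := fun e => e.1.1
  have hπ : Continuous π := by fun_prop
  have hsurj : Surjective π := fun x =>
    let ⟨τ, hτ⟩ := exists_mem hp hq x
    ⟨⟨(x, τ), hτ⟩, rfl⟩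
  have hfibre (x : A) : IsConnected (π ⁻¹' {x}) := by
    refine ⟨hsurj x, ?_⟩
    let T : Set (ι → unitInterval) := univ.pi fun i => {t | IsRatio t (p i x) (q i x)}
    have : PreconnectedSpace T := Subtype.preconnectedSpace
      (isPreconnected_univ_pi fun i => isPreconnected_setOf_isRatio _ _)
    let s : T → ratioBlowUp p q := fun τ => ⟨(x, τ), fun i => τ.2 i trivial⟩
    have hs : range s = π ⁻¹' {x} := by
      ext ⟨⟨y, τ⟩, he⟩
      constructor
      · rintro ⟨τ', h⟩
        exact congrArg π h.symm
      · rintro rfl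
        exact ⟨⟨τ, fun i _ => he i⟩, rfl⟩
    rw [← hs]
    exact isPreconnected_range (by fun_prop)
  have hquot := hπ.isClosedMap.isQuotientMap hπ hsurj
  have huniv := hquot.isCoinducing.isConnected_preimage_of_isClosed hfibre isClosed_univ
    isConnected_univ
  exact connectedSpace_iff_univ.2 (preimage_univ ▸ huniv)

end Topology

end ratioBlowUp

/-! ### Sawtooth ratios on the circle -/

/-- The bump `u (1 - u) ^ 2`, `u ∈ [0, 1)`, on the circle. Its ratio `sawBump θ : sawBump (-θ)` is
the discontinuous sawtooth `1 - u` away from `0` and is indeterminate at `0`. -/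
def sawBump : T1 → ℝ :=
  AddCircle.liftIco 1 0 fun u => u * (1 - u) ^ 2

lemma continuous_sawBump : Continuous sawBump :=
  AddCircle.liftIco_continuous (by norm_num) (by fun_prop)

lemma sawBump_coe (s : ℝ) : sawBump s = Int.fract s * (1 - Int.fract s) ^ 2 := by
  have hs : Int.fract s ∈ Ico (0 : ℝ) (0 + 1) := by simp [Int.fract_nonneg, Int.fract_lt_one]
  rw [← AddCircle.coe_fract, sawBump, AddCircle.liftIco_coe_apply hs]

lemma sawBump_nonneg (θ : T1) : 0 ≤ sawBump θ := by
  obtain ⟨s, rfl⟩ := QuotientAddGroup.mk_surjective θ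
  exact (sawBump_coe s).symm ▸ mul_nonneg (Int.fract_nonneg s) (sq_nonneg _)

@[simp]
lemma sawBump_zero : sawBump 0 = 0 := by
  simpa using sawBump_coe 0

lemma eq_zero_of_sawBump_eq_zero {θ : T1} (h : sawBump θ = 0) : θ = 0 := by
  obtain ⟨s, rfl⟩ := QuotientAddGroup.mk_surjective θ
  have hs : 1 - Int.fract s ≠ 0 := (sub_pos.2 (Int.fract_lt_one s)).ne'
  have hfract : Int.fract s = 0 :=
    (mul_eq_zero.1 ((sawBump_coe s).symm.trans h)).resolve_right (pow_ne_zero 2 hs)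
  exact (AddCircle.coe_fract s).symm.trans (by simp [hfract])

lemma eq_of_sawBump_sub_add_eq_zero {θ x : T1} (h : sawBump (θ - x) + sawBump (x - θ) = 0) :
    θ = x :=
  sub_eq_zero.1 (eq_zero_of_sawBump_eq_zero
    (by linarith [sawBump_nonneg (θ - x), sawBump_nonneg (x - θ)]))

section SawtoothRatio

variable {s s' : ℝ} {t t' : unitInterval}

lemma IsRatio.eq_one_sub_fract (h : IsRatio t (sawBump (s : T1)) (sawBump (-s : T1)))
    (hs : Int.fract s ≠ 0) : (t : ℝ) = 1 - Int.fract s := by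
  rw [IsRatio, ← AddCircle.coe_neg, sawBump_coe, sawBump_coe, Int.fract_neg hs] at h
  have hs' : 1 - Int.fract s ≠ 0 := (sub_pos.2 (Int.fract_lt_one s)).ne'
  exact mul_right_cancel₀ (mul_ne_zero hs hs') (by linear_combination h)

lemma IsRatio.add_mem_Icc (h : IsRatio t (sawBump (s : T1)) (sawBump (-s : T1))) :
    s + t ∈ Icc (⌈s⌉ : ℝ) (⌊s⌋ + 1) := by
  have hfloor := Int.floor_add_fract s
  by_cases hs : Int.fract s = 0
  · obtain ⟨n, rfl⟩ := Int.fract_eq_zero_iff.1 hs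
    simp [t.2.1, t.2.2]
  · have hceil := Int.ceil_eq_add_one_sub_fract hs
    have ht := h.eq_one_sub_fract hs
    constructor <;> linarith

-- The sawtooth has slope `-1` between its jumps, and the jumps are upwards.
lemma IsRatio.add_le_add_of_lt (h : IsRatio t (sawBump (s : T1)) (sawBump (-s : T1)))
    (h' : IsRatio t' (sawBump (s' : T1)) (sawBump (-s' : T1))) (hlt : s < s') :
    s + t ≤ s' + t' := by
  have hceil : (⌊s⌋ : ℝ) + 1 ≤ ⌈s'⌉ := by exact_mod_cast Int.floor_lt_ceil_of_lt hlt
  exact (h.add_mem_Icc.2.trans hceil).trans h'.add_mem_Icc.1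

end SawtoothRatio

lemma not_exists_continuous_isRatio_sawBump :
    ¬∃ τ : T1 → unitInterval, Continuous τ ∧ ∀ θ, IsRatio (τ θ) (sawBump θ) (sawBump (-θ)) := by
  rintro ⟨τ, hτ, hratio⟩
  have hIoo : EqOn (fun s : ℝ => (τ s : ℝ)) (fun s => 1 - s) (Ioo 0 1) := by
    intro s hs
    have hfract : Int.fract s = s := Int.fract_eq_self.2 ⟨hs.1.le, hs.2⟩
    have := (hratio s).eq_one_sub_fract (hfract.symm ▸ hs.1.ne')
    rwa [hfract] at this
  have hIcc : EqOn (fun s : ℝ => (τ s : ℝ)) (fun s => 1 - s) (Icc 0 1) := by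
    rw [← closure_Ioo zero_ne_one]
    have hc : Continuous fun s : ℝ => (τ s : ℝ) :=
      continuous_subtype_val.comp (hτ.comp (AddCircle.continuous_mk' 1))
    exact hIoo.closure hc (by fun_prop)
  have h₀ : (τ (0 : ℝ) : ℝ) = 1 - 0 := hIcc (left_mem_Icc.2 zero_le_one)
  have h₁ : (τ (1 : ℝ) : ℝ) = 1 - 1 := hIcc (right_mem_Icc.2 zero_le_one)
  rw [AddCircle.coe_period, ← AddCircle.coe_zero, h₀] at h₁
  norm_num at h₁

/-! ### Weighted sums -/

section WeightedSum

variable {ι : Type*} [Encodable ι] {τ τ' : ι → unitInterval}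

/-- Positive weights on a countable type, with total mass at most `1 / 2`. -/
def weight (ι : Type*) [Encodable ι] : ι → ℝ :=
  (posSumOfEncodable one_half_pos ι).1

lemma weight_pos (i : ι) : 0 < weight ι i :=
  (posSumOfEncodable one_half_pos ι).2.1 i

lemma summable_weight : Summable (weight ι) :=
  let ⟨_, hsum, _⟩ := (posSumOfEncodable one_half_pos ι).2.2
  hsum.summable

lemma tsum_weight_le : ∑' i, weight ι i ≤ 1 / 2 :=
  let ⟨_, hsum, hle⟩ := (posSumOfEncodable one_half_pos ι).2.2
  hsum.tsum_eq.trans_le hle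

/-- The strictly monotone continuous functional `τ ↦ ∑ i, weight i * τ i`; it measures how many of
the blown-up segments have been passed. -/
def weightedSum (τ : ι → unitInterval) : ℝ :=
  ∑' i, weight ι i * τ i

lemma weight_mul_nonneg (τ : ι → unitInterval) (i : ι) : 0 ≤ weight ι i * τ i :=
  mul_nonneg (weight_pos i).le (τ i).2.1

lemma weight_mul_le (τ : ι → unitInterval) (i : ι) : weight ι i * τ i ≤ weight ι i :=
  mul_le_of_le_one_right (weight_pos i).le (τ i).2.2

lemma summable_weight_mul (τ : ι → unitInterval) : Summable fun i => weight ι i * τ i :=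
  summable_weight.of_nonneg_of_le (weight_mul_nonneg τ) (weight_mul_le τ)

lemma weightedSum_nonneg (τ : ι → unitInterval) : 0 ≤ weightedSum τ :=
  tsum_nonneg (weight_mul_nonneg τ)

lemma weightedSum_le (τ : ι → unitInterval) : weightedSum τ ≤ 1 / 2 :=
  ((summable_weight_mul τ).tsum_le_tsum (weight_mul_le τ) summable_weight).trans tsum_weight_le

lemma continuous_weightedSum : Continuous (weightedSum (ι := ι)) := by
  refine continuous_tsum (fun i => by fun_prop) (summable_weight (ι := ι)) fun i τ => ?_
  rw [Real.norm_of_nonneg (weight_mul_nonneg τ i)]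
  exact weight_mul_le τ i

lemma strictMono_weightedSum : StrictMono (weightedSum (ι := ι)) := by
  intro τ τ' h
  obtain ⟨hle, i, hi⟩ := Pi.lt_def.1 h
  exact (summable_weight_mul τ).tsum_lt_tsum
    (fun j => mul_le_mul_of_nonneg_left (hle j) (weight_pos j).le)
    (mul_lt_mul_of_pos_left hi (weight_pos i)) (summable_weight_mul τ')

lemma weightedSum_sub_le {δ : ℝ} (hδ : 0 ≤ δ) (h : ∀ i, (τ i : ℝ) - τ' i ≤ δ) :
    weightedSum τ - weightedSum τ' ≤ δ / 2 :=
  calc weightedSum τ - weightedSum τ' = ∑' i, (weight ι i * τ i - weight ι i * τ' i) :=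
        ((summable_weight_mul τ).tsum_sub (summable_weight_mul τ')).symm
    _ ≤ ∑' i, weight ι i * δ :=
        ((summable_weight_mul τ).sub (summable_weight_mul τ')).tsum_le_tsum
          (fun i => by rw [← mul_sub]; exact mul_le_mul_of_nonneg_left (h i) (weight_pos i).le)
          (summable_weight.mul_right δ)
    _ = (∑' i, weight ι i) * δ := tsum_mul_right
    _ ≤ δ / 2 := by linarith [mul_le_mul_of_nonneg_right (tsum_weight_le (ι := ι)) hδ]

end WeightedSum

/-! ### Denjoy homeomorphisms -/

/-- The circle with the points `c i` blown up to segments, the `i`-th ratio being the sawtooth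
that jumps at `c i`. -/
abbrev circleBlowUp {ι : Type*} (c : ι → T1) : Set (T1 × (ι → unitInterval)) :=
  ratioBlowUp (fun i θ => sawBump (θ - c i)) fun i θ => sawBump (c i - θ)

namespace circleBlowUp

section Collapse

variable {ι : Type*} {c : ι → T1}

instance : CompactSpace (circleBlowUp c) := by
  have := continuous_sawBump
  exact ratioBlowUp.compactSpace (fun i => by fun_prop) fun i => by fun_prop

lemma snd_le_total (hc : Injective c) {e e' : circleBlowUp c} (h : e.1.1 = e'.1.1) :
    e.1.2 ≤ e'.1.2 ∨ e'.1.2 ≤ e.1.2 :=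
  ratioBlowUp.snd_le_total h fun _ hi _ hj => hc <|
    (eq_of_sawBump_sub_add_eq_zero hi).symm.trans (eq_of_sawBump_sub_add_eq_zero hj)

variable [Encodable ι]

lemma add_weightedSum_lt {e e' : circleBlowUp c} {s s' : ℝ} (hs : (s : T1) = e.1.1)
    (hs' : (s' : T1) = e'.1.1) (hlt : s < s') :
    s + weightedSum e.1.2 < s' + weightedSum e'.1.2 := by
  have hτ (i : ι) : (e.1.2 i : ℝ) - e'.1.2 i ≤ s' - s := by
    obtain ⟨x, hx⟩ := QuotientAddGroup.mk_surjective (c i)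
    have hi : IsRatio (e.1.2 i) (sawBump (s - x : ℝ)) (sawBump (-(s - x : ℝ) : T1)) := by
      simpa [← hx, ← hs] using e.2 i
    have hi' : IsRatio (e'.1.2 i) (sawBump (s' - x : ℝ)) (sawBump (-(s' - x : ℝ) : T1)) := by
      simpa [← hx, ← hs'] using e'.2 i
    linarith [hi.add_le_add_of_lt hi' (sub_lt_sub_right hlt x)]
  linarith [weightedSum_sub_le (sub_pos.2 hlt).le hτ]

/-- The projection of the circle blow-up back to a circle, which gives the segment over `c i` the
length `weight i`. -/
def toCircle (e : circleBlowUp c) : T1 :=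
  e.1.1 + (weightedSum e.1.2 : T1)

lemma toCircle_eq {e : circleBlowUp c} {s : ℝ} (hs : (s : T1) = e.1.1) :
    toCircle e = (s + weightedSum e.1.2 : ℝ) := by
  rw [toCircle, ← hs, AddCircle.coe_add]

lemma continuous_toCircle : Continuous (toCircle (c := c)) := by
  have hsum : Continuous fun e : circleBlowUp c => (weightedSum e.1.2 : T1) :=
    (AddCircle.continuous_mk' 1).comp (continuous_weightedSum.comp (by fun_prop))
  exact Continuous.add (by fun_prop) hsum

lemma injective_toCircle (hc : Injective c) : Injective (toCircle (c := c)) := by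
  intro e e' h
  obtain ⟨s, hs⟩ := QuotientAddGroup.mk_surjective e.1.1
  obtain ⟨s', ⟨hle, hlt⟩, hs'⟩ : e'.1.1 ∈ (fun x : ℝ => (x : T1)) '' Ico s (s + 1) := by
    rw [AddCircle.coe_image_Ico_eq]
    trivial
  rw [toCircle_eq hs, toCircle_eq hs'] at h
  rcases hle.eq_or_lt with rfl | hlt'
  · have hmem (τ : ι → unitInterval) : s + weightedSum τ ∈ Ico s (s + 1) :=
      ⟨by linarith [weightedSum_nonneg τ], by linarith [weightedSum_le τ]⟩
    have hsum : weightedSum e.1.2 = weightedSum e'.1.2 :=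
      add_left_cancel ((AddCircle.coe_eq_coe_iff_of_mem_Ico (hmem _) (hmem _)).1 h)
    have hbase : e.1.1 = e'.1.1 := hs.symm.trans hs'
    refine Subtype.ext (Prod.ext hbase ?_)
    rcases snd_le_total hc hbase with hτ | hτ
    · exact hτ.eq_of_not_lt fun hτ' => (strictMono_weightedSum hτ').ne hsum
    · exact (hτ.eq_of_not_lt fun hτ' => (strictMono_weightedSum hτ').ne' hsum).symm
  · have hs₁ : ((s + 1 : ℝ) : T1) = e.1.1 := (AddCircle.coe_add_period 1 s).trans hs
    have hlow := add_weightedSum_lt hs hs' hlt'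
    have hupp := add_weightedSum_lt hs' hs₁ hlt
    have hmem : s' + weightedSum e'.1.2 ∈
        Ico (s + weightedSum e.1.2) (s + weightedSum e.1.2 + 1) := ⟨hlow.le, by linarith⟩
    have hmem₀ := left_mem_Ico.2 (lt_add_one (s + weightedSum e.1.2))
    exact absurd ((AddCircle.coe_eq_coe_iff_of_mem_Ico hmem₀ hmem).1 h) hlow.ne

lemma surjective_toCircle : Surjective (toCircle (c := c)) := by
  intro θ
  obtain ⟨t, rfl⟩ := QuotientAddGroup.mk_surjective θ
  let p (i : ι) (u : unitInterval) : ℝ := sawBump ((u : ℝ) - c i)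
  let q (i : ι) (u : unitInterval) : ℝ := sawBump (c i - (u : ℝ))
  have hsaw := continuous_sawBump
  have : Continuous fun u : unitInterval => ((u : ℝ) : T1) :=
    (AddCircle.continuous_mk' 1).comp continuous_subtype_val
  have : ConnectedSpace (ratioBlowUp p q) := ratioBlowUp.connectedSpace (fun i => by fun_prop)
    (fun i => by fun_prop) (fun _ _ => sawBump_nonneg _) fun _ _ => sawBump_nonneg _
  let F (e : ratioBlowUp p q) : ℝ := e.1.1 + weightedSum e.1.2
  have hF : Continuous F := by
    have := continuous_weightedSum (ι := ι)
    fun_prop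
  obtain ⟨τ, hτ⟩ := ratioBlowUp.exists_mem (p := p) (q := q) (fun _ _ => sawBump_nonneg _)
    (fun _ _ => sawBump_nonneg _) 0
  have hτ₁ : (1, τ) ∈ ratioBlowUp p q := by
    simpa [ratioBlowUp, p, q, AddCircle.coe_period] using hτ
  let x := Int.fract (t - weightedSum τ)
  obtain ⟨e, he⟩ : x + weightedSum τ ∈ range F := by
    refine mem_range_of_exists_le_of_exists_ge hF ⟨⟨(0, τ), hτ⟩, ?_⟩ ⟨⟨(1, τ), hτ₁⟩, ?_⟩
    · simp [F, x, Int.fract_nonneg]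
    · simp [F, x, (Int.fract_lt_one _).le]
  refine ⟨⟨(((e.1.1 : ℝ) : T1), e.1.2), e.2⟩, ?_⟩
  calc toCircle _ = (F e : T1) := toCircle_eq rfl
    _ = t := by rw [he, AddCircle.coe_add, AddCircle.coe_fract, ← AddCircle.coe_add, sub_add_cancel]

/-- `circleBlowUp.toCircle` as a homeomorphism. -/
def homeoCircle (hc : Injective c) : circleBlowUp c ≃ₜ T1 :=
  Continuous.homeoOfEquivCompactToT2
    (f := Equiv.ofBijective toCircle ⟨injective_toCircle hc, surjective_toCircle⟩)
    continuous_toCircle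

lemma toCircle_homeoCircle_symm (hc : Injective c) (t : T1) :
    toCircle ((homeoCircle hc).symm t) = t :=
  (homeoCircle hc).apply_symm_apply t

end Collapse

section Rotation

variable {ι : Type*} {c : ι → T1} {σ : Equiv.Perm ι}

/-- The homeomorphism of the circle blow-up lifting the rotation by `ρ`, when this rotation permutes
the centers. -/
def rotate (ρ : T1) (hσ : ∀ i, c (σ i) = c i + ρ) : circleBlowUp c ≃ₜ circleBlowUp c :=
  ratioBlowUp.mapHomeomorph (Homeomorph.addRight ρ) σ (fun i θ => by simp [hσ])
    fun i θ => by simp [hσ]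

variable [Encodable ι]

/-- The homeomorphism of the circle that permutes the blown-up segments as the rotation by `ρ`
permutes their centers. -/
def denjoyHomeo (hc : Injective c) (ρ : T1) (hσ : ∀ i, c (σ i) = c i + ρ) : T1 ≃ₜ T1 :=
  (homeoCircle hc).symm.trans ((rotate ρ hσ).trans (homeoCircle hc))

lemma homeoCircle_symm_denjoyHomeo (hc : Injective c) {ρ : T1} (hσ : ∀ i, c (σ i) = c i + ρ)
    (t : T1) :
    (homeoCircle hc).symm (denjoyHomeo hc ρ hσ t) = rotate ρ hσ ((homeoCircle hc).symm t) := by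
  simp [denjoyHomeo]

lemma coe_sub_weightedSum (hc : Injective c) (t : ℝ) :
    ((t - weightedSum ((homeoCircle hc).symm t).1.2 : ℝ) : T1) = ((homeoCircle hc).symm t).1.1 := by
  rw [AddCircle.coe_sub, sub_eq_iff_eq_add]
  exact (toCircle_homeoCircle_symm hc t).symm

/-- The degree one monotone map collapsing the segments of the circle blow-up, lifted to `ℝ`. -/
def collapseLift (hc : Injective c) : CircleDeg1Lift where
  toFun t := t - weightedSum ((homeoCircle hc).symm t).1.2
  monotone' t t' h := by
    by_contra! hlt
    linarith [add_weightedSum_lt (coe_sub_weightedSum hc t') (coe_sub_weightedSum hc t) hlt]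
  map_add_one' t := by simp [add_sub_right_comm]

lemma collapseLift_apply (hc : Injective c) (t : ℝ) :
    collapseLift hc t = t - weightedSum ((homeoCircle hc).symm t).1.2 :=
  rfl

lemma coe_collapseLift (hc : Injective c) (t : ℝ) :
    (collapseLift hc t : T1) = ((homeoCircle hc).symm t).1.1 :=
  coe_sub_weightedSum hc t

variable {ρ : ℝ}

lemma coe_collapseLift_add (hc : Injective c) (hσ : ∀ i, c (σ i) = c i + ρ) (t : ℝ) :
    ((collapseLift hc t + ρ : ℝ) : T1) = (rotate (ρ : T1) hσ ((homeoCircle hc).symm t)).1.1 :=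
  (AddCircle.coe_add 1 _ _).trans (congrArg (· + (ρ : T1)) (coe_collapseLift hc t))

lemma monotone_add_weightedSum_rotate (hc : Injective c) (hσ : ∀ i, c (σ i) = c i + ρ) :
    Monotone fun t : ℝ =>
      collapseLift hc t + ρ + weightedSum (rotate (ρ : T1) hσ ((homeoCircle hc).symm t)).1.2 := by
  intro t t' h
  rcases ((collapseLift hc).monotone h).eq_or_lt with heq | hlt
  · have hbase : ((homeoCircle hc).symm t).1.1 = ((homeoCircle hc).symm t').1.1 := by
      rw [← coe_collapseLift, ← coe_collapseLift, heq]
    have hle : weightedSum ((homeoCircle hc).symm t).1.2 ≤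
        weightedSum ((homeoCircle hc).symm t').1.2 := by
      rw [collapseLift_apply, collapseLift_apply] at heq
      linarith
    have hτ : ((homeoCircle hc).symm t).1.2 ≤ ((homeoCircle hc).symm t').1.2 :=
      (snd_le_total hc hbase).elim id fun hτ =>
        (hτ.eq_of_not_lt fun hlt => (strictMono_weightedSum hlt).not_ge hle).ge
    exact add_le_add (by rw [heq]) (strictMono_weightedSum.monotone fun i => hτ (σ.symm i))
  · exact (add_weightedSum_lt (coe_collapseLift_add hc hσ t) (coe_collapseLift_add hc hσ t')
      (by linarith)).le

/-- The lift of `denjoyHomeo` to `ℝ`. -/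
def denjoyLift (hc : Injective c) (hσ : ∀ i, c (σ i) = c i + ρ) : CircleDeg1Lift where
  toFun t := collapseLift hc t + ρ + weightedSum (rotate (ρ : T1) hσ ((homeoCircle hc).symm t)).1.2
  monotone' := monotone_add_weightedSum_rotate hc hσ
  map_add_one' t := by simp only [AddCircle.coe_add_period, CircleDeg1Lift.map_add_one]; ring

lemma coe_denjoyLift (hc : Injective c) (hσ : ∀ i, c (σ i) = c i + ρ) (t : ℝ) :
    (denjoyLift hc hσ t : T1) = denjoyHomeo hc ρ hσ t :=
  (toCircle_eq (coe_collapseLift_add hc hσ t)).symm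

lemma semiconj_collapseLift_denjoyLift (hc : Injective c) (hσ : ∀ i, c (σ i) = c i + ρ) :
    Semiconj (collapseLift hc) (denjoyLift hc hσ)
      (CircleDeg1Lift.translate (Multiplicative.ofAdd ρ)) := by
  intro t
  rw [CircleDeg1Lift.translate_apply, collapseLift_apply, coe_denjoyLift,
    homeoCircle_symm_denjoyHomeo]
  exact (add_sub_cancel_right _ _).trans (add_comm _ _)

lemma translationNumber_denjoyLift (hc : Injective c) (hσ : ∀ i, c (σ i) = c i + ρ) :
    (denjoyLift hc hσ).translationNumber = ρ :=
  (CircleDeg1Lift.translationNumber_eq_of_semiconj (semiconj_collapseLift_denjoyLift hc hσ)).trans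
    (CircleDeg1Lift.translationNumber_translate ρ)

lemma exists_Ioo_homeoCircle_symm_eq (hc : Injective c) (i : ι) :
    ∃ a b : ℝ, a < b ∧ b < a + 1 ∧ ∀ t ∈ Ioo a b, ((homeoCircle hc).symm (t : T1)).1.1 = c i := by
  classical
  obtain ⟨s, hs⟩ := QuotientAddGroup.mk_surjective (c i)
  obtain ⟨τ, hτ⟩ := ratioBlowUp.exists_mem (p := fun j θ => sawBump (θ - c j))
    (q := fun j θ => sawBump (c j - θ)) (fun _ _ => sawBump_nonneg _)
    (fun _ _ => sawBump_nonneg _) (c i)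
  let e (r : unitInterval) : circleBlowUp c :=
    ⟨(c i, update τ i r), ratioBlowUp.update_mem hτ (by simp) (by simp) r⟩
  let F (r : unitInterval) : ℝ := s + weightedSum (update τ i r)
  have hF : Continuous F := by
    have := continuous_weightedSum (ι := ι)
    fun_prop
  have hlt : F 0 < F 1 :=
    add_lt_add_right (strictMono_weightedSum (update_lt_update_iff.2 zero_lt_one)) s
  refine ⟨F 0, F 1, hlt, ?_, fun t ht => ?_⟩
  · linarith [weightedSum_le (update τ i 1), weightedSum_nonneg (update τ i 0)]
  · obtain ⟨r, hr⟩ := mem_range_of_exists_le_of_exists_ge hF ⟨0, ht.1.le⟩ ⟨1, ht.2.le⟩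
    have hcircle : homeoCircle hc (e r) = t := (toCircle_eq (e := e r) hs).trans (by rw [← hr])
    rw [← hcircle, Homeomorph.symm_apply_apply]

end Rotation

end circleBlowUp

lemma map_zIter_eq_add_zsmul {X G : Type*} [AddCommGroup G] {g : Equiv.Perm X} {π : X → G} {ρ : G}
    (h : ∀ x, π (g x) = π x + ρ) (m : ℤ) (x : X) : π (zIter g m x) = π x + m • ρ := by
  have hsucc (k : ℤ) : π (zIter g (k + 1) x) = π (zIter g k x) + ρ := by
    rw [zIter, add_comm, zpow_one_add, Equiv.Perm.mul_apply, h, zIter]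
  induction m using Int.induction_on with
  | zero => simp [zIter]
  | succ k ih => rw [hsucc, ih, add_zsmul, one_zsmul, add_assoc]
  | pred k ih =>
    have hk := hsucc (-k - 1)
    rw [sub_add_cancel, ih] at hk
    rw [sub_one_zsmul, ← add_assoc, ← sub_eq_add_neg]
    exact eq_sub_of_add_eq hk.symm

lemma injective_zsmul_coe_of_irrational {ρ : ℝ} (hρ : Irrational ρ) :
    Injective fun m : ℤ => m • (ρ : T1) :=
  injective_zsmul_iff_not_isOfFinAddOrder.2
    (AddCircle.not_isOfFinAddOrder_iff_forall_rat_ne_div.2 fun q hq => hρ ⟨q, by simpa using hq⟩)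

theorem circleBlowUp.denjoyType_denjoyHomeo {ι : Type*} [Encodable ι] [Nonempty ι] {c : ι → T1}
    {σ : Equiv.Perm ι} (hc : Injective c) {ρ : ℝ} (hρ : Irrational ρ)
    (hσ : ∀ i, c (σ i) = c i + ρ) : DenjoyType (denjoyHomeo hc ρ hσ) := by
  refine ⟨⟨denjoyLift hc hσ, coe_denjoyLift hc hσ, ?_⟩, ?_⟩
  · rwa [translationNumber_denjoyLift]
  obtain ⟨i⟩ := ‹Nonempty ι›
  obtain ⟨a, b, hab, hba, hbase⟩ := exists_Ioo_homeoCircle_symm_eq hc i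
  refine ⟨a, b, hab, hba, fun m n hmn => ?_⟩
  let G := denjoyHomeo hc (ρ : T1) hσ
  have hiter (m : ℤ) {t : ℝ} (ht : t ∈ Ioo a b) :
      ((homeoCircle hc).symm (zIter G.toEquiv m t)).1.1 = c i + m • (ρ : T1) := by
    rw [← hbase t ht]
    exact map_zIter_eq_add_zsmul (π := fun t => ((homeoCircle hc).symm t).1.1)
      (fun t => congrArg (fun e => e.1.1) (homeoCircle_symm_denjoyHomeo hc hσ t)) m t
  rw [disjoint_left]
  rintro _ ⟨_, ⟨t, ht, rfl⟩, rfl⟩ ⟨_, ⟨t', ht', rfl⟩, h⟩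
  have hsmul : c i + n • (ρ : T1) = c i + m • (ρ : T1) := by
    rw [← hiter n ht', ← hiter m ht]
    exact congrArg (fun t => ((homeoCircle hc).symm t).1.1) h
  exact hmn (injective_zsmul_coe_of_irrational hρ (add_left_cancel hsmul)).symm

/-! ### Blowing up points of a curve in a strip -/

section Stretch

variable {a b x x' s s' : ℝ}

/-- The family of maps of `[a, b]` that fixes the endpoints and moves interior points upwards as
`s` grows. -/
def stretch (a b x s : ℝ) : ℝ :=
  x + s * ((x - a) * (b - x) / (b - a))

lemma stretch_left (a b s : ℝ) : stretch a b a s = a := by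
  simp [stretch]

lemma stretch_right (a b s : ℝ) : stretch a b b s = b := by
  simp [stretch]

lemma stretch_lt_stretch_of_snd_lt (hx : x ∈ Ioo a b) (hs : s < s') :
    stretch a b x s < stretch a b x s' := by
  have hpos : 0 < (x - a) * (b - x) / (b - a) :=
    div_pos (mul_pos (sub_pos.2 hx.1) (sub_pos.2 hx.2)) (sub_pos.2 (hx.1.trans hx.2))
  exact add_lt_add_right (mul_lt_mul_of_pos_right hs hpos) x

lemma stretch_lt_stretch_of_fst_lt (hx : x ∈ Icc a b) (hx' : x' ∈ Icc a b) (hlt : x < x')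
    (hs₀ : 0 ≤ s) (hs₁ : s < 1) (hs : s ≤ s') : stretch a b x s < stretch a b x' s' := by
  have hab : 0 < b - a := by linarith [hx.1, hx'.2]
  have hslope : (x - a) * (b - x) / (b - a) - (x' - a) * (b - x') / (b - a) ≤ x' - x := by
    rw [← sub_div, div_le_iff₀ hab]
    calc (x - a) * (b - x) - (x' - a) * (b - x') = (x' - x) * (x + x' - a - b) := by ring
      _ ≤ (x' - x) * (b - a) :=
        mul_le_mul_of_nonneg_left (by linarith [hx.2, hx'.2]) (sub_pos.2 hlt).le
  have hnonneg : 0 ≤ (x' - a) * (b - x') / (b - a) :=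
    div_nonneg (mul_nonneg (sub_nonneg.2 hx'.1) (sub_nonneg.2 hx'.2)) hab.le
  have h₁ := mul_le_mul_of_nonneg_left hslope hs₀
  have h₂ := mul_le_mul_of_nonneg_right hs hnonneg
  have h₃ := mul_lt_mul_of_pos_right hs₁ (sub_pos.2 hlt)
  unfold stretch
  linarith

lemma stretch_mem_Icc (hx : x ∈ Icc a b) (hs₀ : 0 ≤ s) (hs₁ : s < 1) :
    stretch a b x s ∈ Icc a b := by
  have hab := left_mem_Icc.2 (hx.1.trans hx.2)
  have hba := right_mem_Icc.2 (hx.1.trans hx.2)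
  constructor
  · rcases hx.1.eq_or_lt with rfl | hlt
    · rw [stretch_left]
    · exact (stretch_left a b s).symm.trans_le
        (stretch_lt_stretch_of_fst_lt hab hx hlt hs₀ hs₁ le_rfl).le
  · rcases hx.2.eq_or_lt with rfl | hlt
    · rw [stretch_right]
    · exact (stretch_lt_stretch_of_fst_lt hx hba hlt hs₀ hs₁ le_rfl).le.trans_eq
        (stretch_right a b s)

end Stretch

lemma exists_eq_Icc_of_isCompact {α : Type*} [LinearOrder α] [TopologicalSpace α]
    [OrderClosedTopology α] {s : Set α} (hs : IsCompact s) (hne : s.Nonempty)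
    (hconn : s.OrdConnected) : ∃ x₁ x₂, s = Icc x₁ x₂ := by
  obtain ⟨x₁, h₁⟩ := hs.exists_isLeast hne
  obtain ⟨x₂, h₂⟩ := hs.exists_isGreatest hne
  exact ⟨x₁, x₂, Subset.antisymm (fun x hx => ⟨h₁.2 hx, h₂.2 hx⟩) (hconn.out h₁.1 h₂.1)⟩

/-- A curve in the interior of the strip `T1 × [a, b]`, the base points `center i` of the points of
the curve to be blown up, and for each of them a function `height i` that measures the signed
vertical position relative to the curve. -/
structure BlowUpData (ι : Type*) (a b : ℝ) where
  curve : T1 → Icc a b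
  continuous_curve : Continuous curve
  curve_mem_Ioo (θ : T1) : (curve θ : ℝ) ∈ Ioo a b
  center : ι → T1
  injective_center : Injective center
  height : ι → T1 × Icc a b → ℝ
  continuous_height (i : ι) : Continuous (height i)
  strictMono_height (i : ι) (θ : T1) : StrictMono fun x => height i (θ, x)
  height_curve (i : ι) (θ : T1) : height i (θ, curve θ) = 0

namespace BlowUpData

variable {ι : Type*} {a b : ℝ} (D : BlowUpData ι a b)

/-- The point of the curve over `D.center i`. -/
def point (i : ι) : T1 × Icc a b :=
  (D.center i, D.curve (D.center i))

/-- The first term of the `i`-th ratio, which outweighs `D.below i` above the curve. -/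
def above (i : ι) (p : T1 × Icc a b) : ℝ :=
  sawBump (p.1 - D.center i) + max (D.height i p) 0

/-- The second term of the `i`-th ratio, which outweighs `D.above i` below the curve. -/
def below (i : ι) (p : T1 × Icc a b) : ℝ :=
  sawBump (D.center i - p.1) + max (-D.height i p) 0

lemma continuous_above (i : ι) : Continuous (D.above i) := by
  have := continuous_sawBump
  have := D.continuous_height i
  unfold above
  fun_prop

lemma continuous_below (i : ι) : Continuous (D.below i) := by
  have := continuous_sawBump
  have := D.continuous_height i
  unfold below
  fun_prop

lemma above_nonneg (i : ι) (p : T1 × Icc a b) : 0 ≤ D.above i p :=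
  add_nonneg (sawBump_nonneg _) (le_max_right _ _)

lemma below_nonneg (i : ι) (p : T1 × Icc a b) : 0 ≤ D.below i p :=
  add_nonneg (sawBump_nonneg _) (le_max_right _ _)

lemma above_curve (i : ι) (θ : T1) : D.above i (θ, D.curve θ) = sawBump (θ - D.center i) := by
  simp [above, height_curve]

lemma below_curve (i : ι) (θ : T1) : D.below i (θ, D.curve θ) = sawBump (D.center i - θ) := by
  simp [below, height_curve]

lemma eq_point_of_above_add_below_eq_zero {i : ι} {p : T1 × Icc a b}
    (h : D.above i p + D.below i p = 0) : p = D.point i := by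
  obtain ⟨θ, x⟩ := p
  unfold above below at h
  have h₁ := sawBump_nonneg (θ - D.center i)
  have h₂ := sawBump_nonneg (D.center i - θ)
  have h₃ := le_max_right (D.height i (θ, x)) 0
  have h₄ := le_max_right (-D.height i (θ, x)) 0
  obtain rfl : θ = D.center i := eq_of_sawBump_sub_add_eq_zero (by linarith)
  have hheight : D.height i (D.center i, x) = 0 := by
    linarith [le_max_left (D.height i (D.center i, x)) 0,
      le_max_left (-D.height i (D.center i, x)) 0]
  exact Prod.ext rfl ((D.strictMono_height i _).injective (hheight.trans (D.height_curve i _).symm))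

/-- The strip with the points `D.point i` blown up. -/
abbrev space : Set ((T1 × Icc a b) × (ι → unitInterval)) :=
  ratioBlowUp D.above D.below

instance : CompactSpace D.space :=
  ratioBlowUp.compactSpace D.continuous_above D.continuous_below

variable {D}

lemma snd_le_of_lt {e e' : D.space} (hθ : e.1.1.1 = e'.1.1.1) (hx : e.1.1.2 < e'.1.1.2) :
    e.1.2 ≤ e'.1.2 := by
  obtain ⟨⟨⟨θ, x⟩, τ⟩, h⟩ := e
  obtain ⟨⟨⟨θ', x'⟩, τ'⟩, h'⟩ := e'
  obtain rfl : θ = θ' := hθ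
  intro i
  have hheight : D.height i (θ, x) < D.height i (θ, x') := D.strictMono_height i θ hx
  refine (h i).le (h' i) (D.above_nonneg i _) (D.below_nonneg i _) ?_ ?_ ?_
  · exact add_le_add_right (max_le_max_right 0 hheight.le) _
  · exact add_le_add_right (max_le_max_right 0 (neg_le_neg hheight.le)) _
  · have hsub := max_zero_sub_max_neg_zero_eq_self (D.height i (θ, x))
    have hsub' := max_zero_sub_max_neg_zero_eq_self (D.height i (θ, x'))
    simp only [above, below]
    linarith

lemma eq_point_of_snd_ne {e e' : D.space} (h : e.1.1 = e'.1.1) {i : ι} (hi : e.1.2 i ≠ e'.1.2 i) :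
    e.1.1 = D.point i := by
  refine D.eq_point_of_above_add_below_eq_zero ?_
  by_contra hne
  exact hi ((e.2 i).eq (h ▸ e'.2 i) hne)

/-- The vertical coordinates of a point of the blown-up strip. -/
def vert (e : D.space) : Icc a b × (ι → unitInterval) :=
  (e.1.1.2, e.1.2)

lemma vert_lt_trichotomy {e e' : D.space} (hθ : e.1.1.1 = e'.1.1.1) :
    vert e < vert e' ∨ e = e' ∨ vert e' < vert e := by
  have hlt {e e' : D.space} (hle : vert e ≤ vert e') (hne : e.1 ≠ e'.1)
      (hθ : e.1.1.1 = e'.1.1.1) : vert e < vert e' :=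
    hle.lt_of_ne fun h => hne (Prod.ext (Prod.ext hθ (Prod.ext_iff.1 h).1) (Prod.ext_iff.1 h).2)
  by_cases heq : e.1 = e'.1
  · exact Or.inr (Or.inl (Subtype.ext heq))
  rcases lt_trichotomy e.1.1.2 e'.1.1.2 with hx | hx | hx
  · exact Or.inl (hlt ⟨hx.le, snd_le_of_lt hθ hx⟩ heq hθ)
  · have hs : {i | D.above i e.1.1 + D.below i e.1.1 = 0}.Subsingleton := fun i hi j hj =>
      D.injective_center <| congrArg Prod.fst <|
        (D.eq_point_of_above_add_below_eq_zero hi).symm.trans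
          (D.eq_point_of_above_add_below_eq_zero hj)
    rcases ratioBlowUp.snd_le_total (Prod.ext hθ hx) hs with hτ | hτ
    · exact Or.inl (hlt ⟨hx.le, hτ⟩ heq hθ)
    · exact Or.inr (Or.inr (hlt ⟨hx.ge, hτ⟩ (Ne.symm heq) hθ.symm))
  · exact Or.inr (Or.inr (hlt ⟨hx.le, snd_le_of_lt hθ.symm hx⟩ (Ne.symm heq) hθ.symm))

section Flatten

variable [Encodable ι]

/-- The identification of the blown-up strip with the strip, which shears the segment over
`D.point i` into the vertical direction with a length governed by `weight i`. -/
def flatten (e : D.space) : T1 × Icc a b :=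
  (e.1.1.1, ⟨stretch a b e.1.1.2 (weightedSum e.1.2), stretch_mem_Icc e.1.1.2.2
    (weightedSum_nonneg _) (by linarith [weightedSum_le e.1.2])⟩)

lemma continuous_flatten : Continuous (flatten (D := D)) := by
  have := continuous_weightedSum (ι := ι)
  unfold flatten stretch
  fun_prop

lemma flatten_snd_lt {e e' : D.space} (hθ : e.1.1.1 = e'.1.1.1) (h : vert e < vert e') :
    (flatten e).2 < (flatten e').2 := by
  have hweight : weightedSum e.1.2 ≤ weightedSum e'.1.2 := strictMono_weightedSum.monotone h.le.2
  rcases h.le.1.eq_or_lt with hx | hx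
  · have hbase : e.1.1 = e'.1.1 := Prod.ext hθ hx
    have hτ : e.1.2 < e'.1.2 := h.le.2.lt_of_ne fun hτ => h.ne (Prod.ext hx hτ)
    obtain ⟨i, hi⟩ := (Pi.lt_def.1 hτ).2
    have hIoo : (e.1.1.2 : ℝ) ∈ Ioo a b := by
      rw [eq_point_of_snd_ne hbase hi.ne]
      exact D.curve_mem_Ioo _
    have hlt := stretch_lt_stretch_of_snd_lt hIoo (strictMono_weightedSum hτ)
    simpa only [flatten, ← hbase, Subtype.mk_lt_mk] using hlt
  · exact stretch_lt_stretch_of_fst_lt e.1.1.2.2 e'.1.1.2.2 hx (weightedSum_nonneg _)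
      (by linarith [weightedSum_le e.1.2]) hweight

lemma flatten_snd_lt_iff {e e' : D.space} (hθ : e.1.1.1 = e'.1.1.1) :
    (flatten e).2 < (flatten e').2 ↔ vert e < vert e' := by
  refine ⟨fun h => ?_, flatten_snd_lt hθ⟩
  rcases vert_lt_trichotomy hθ with hv | rfl | hv
  · exact hv
  · exact absurd h (lt_irrefl _)
  · exact absurd h (flatten_snd_lt hθ.symm hv).asymm

lemma injective_flatten : Injective (flatten (D := D)) := by
  intro e e' h
  have hθ : e.1.1.1 = e'.1.1.1 := (Prod.ext_iff.1 h).1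
  have hx : (flatten e).2 = (flatten e').2 := (Prod.ext_iff.1 h).2
  rcases vert_lt_trichotomy hθ with hv | heq | hv
  · exact absurd hx (flatten_snd_lt hθ hv).ne
  · exact heq
  · exact absurd hx (flatten_snd_lt hθ.symm hv).ne'

lemma surjective_flatten : Surjective (flatten (D := D)) := by
  rintro ⟨θ, y⟩
  have hab : a ≤ b := y.2.1.trans y.2.2
  let p (i : ι) (x : Icc a b) : ℝ := D.above i (θ, x)
  let q (i : ι) (x : Icc a b) : ℝ := D.below i (θ, x)
  have hp (i : ι) (x : Icc a b) : 0 ≤ p i x := D.above_nonneg i _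
  have hq (i : ι) (x : Icc a b) : 0 ≤ q i x := D.below_nonneg i _
  have : ConnectedSpace (Icc a b) := Subtype.connectedSpace (isConnected_Icc hab)
  have : ConnectedSpace (ratioBlowUp p q) := ratioBlowUp.connectedSpace
    (fun i => (D.continuous_above i).comp (by fun_prop))
    (fun i => (D.continuous_below i).comp (by fun_prop)) hp hq
  let F (e : ratioBlowUp p q) : ℝ := stretch a b e.1.1 (weightedSum e.1.2)
  have hF : Continuous F := by
    have := continuous_weightedSum (ι := ι)
    unfold F stretch
    fun_prop
  obtain ⟨τ, hτ⟩ := ratioBlowUp.exists_mem hp hq ⟨a, left_mem_Icc.2 hab⟩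
  obtain ⟨τ', hτ'⟩ := ratioBlowUp.exists_mem hp hq ⟨b, right_mem_Icc.2 hab⟩
  obtain ⟨e, he⟩ : (y : ℝ) ∈ range F := by
    refine mem_range_of_exists_le_of_exists_ge hF ⟨⟨_, hτ⟩, ?_⟩ ⟨⟨_, hτ'⟩, ?_⟩
    · exact (stretch_left a b _).trans_le y.2.1
    · exact y.2.2.trans_eq (stretch_right a b _).symm
  exact ⟨⟨((θ, e.1.1), e.1.2), e.2⟩, Prod.ext rfl (Subtype.ext he)⟩

variable (D) in
/-- `BlowUpData.flatten` as a homeomorphism. -/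
def flattenHomeo : D.space ≃ₜ T1 × Icc a b :=
  Continuous.homeoOfEquivCompactToT2
    (f := Equiv.ofBijective flatten ⟨injective_flatten, surjective_flatten⟩) continuous_flatten

lemma flattenHomeo_symm_fst (p : T1 × Icc a b) : (D.flattenHomeo.symm p).1.1.1 = p.1 :=
  (Prod.ext_iff.1 (D.flattenHomeo.apply_symm_apply p)).1

lemma strictMono_vert (D : BlowUpData ι a b) (θ : T1) :
    StrictMono fun x => vert (D.flattenHomeo.symm (θ, x)) := by
  intro x x' hx
  have hflat (y : Icc a b) : (flatten (D.flattenHomeo.symm (θ, y))).2 = y :=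
    congrArg Prod.snd (D.flattenHomeo.apply_symm_apply (θ, y))
  refine (flatten_snd_lt_iff ?_).1 (by rwa [hflat, hflat])
  rw [flattenHomeo_symm_fst, flattenHomeo_symm_fst]

end Flatten

section Projection

variable [Encodable ι] (D)

/-- The projection of the blown-up strip, identified with the strip, to the original one. -/
def proj (p : T1 × Icc a b) : T1 × Icc a b :=
  (D.flattenHomeo.symm p).1.1

lemma continuous_proj : Continuous D.proj := by
  unfold proj
  fun_prop

lemma proj_flattenHomeo (e : D.space) : D.proj (D.flattenHomeo e) = e.1.1 := by
  rw [proj, Homeomorph.symm_apply_apply]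

lemma surjective_proj : Surjective D.proj := by
  intro p
  obtain ⟨τ, hτ⟩ := ratioBlowUp.exists_mem D.above_nonneg D.below_nonneg p
  exact ⟨D.flattenHomeo ⟨(p, τ), hτ⟩, D.proj_flattenHomeo _⟩

lemma proj_fst (p : T1 × Icc a b) : (D.proj p).1 = p.1 :=
  flattenHomeo_symm_fst p

lemma monotone_proj (θ : T1) : Monotone fun x => (D.proj (θ, x)).2 :=
  fun _ _ h => ((D.strictMono_vert θ).monotone h).1

lemma injOn_proj : InjOn D.proj (D.proj ⁻¹' range D.point)ᶜ := by
  intro p hp p' _ h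
  refine D.flattenHomeo.symm.injective (ratioBlowUp.eq_of_fst_eq h fun i hi => ?_)
  exact hp ⟨i, (D.eq_point_of_above_add_below_eq_zero hi).symm⟩

lemma exists_proj_preimage_eq_singleton {p : T1 × Icc a b} (hp : p ∉ range D.point) :
    ∃ x, D.proj ⁻¹' {p} = {(p.1, x)} := by
  obtain ⟨⟨θ, x⟩, rfl⟩ := D.surjective_proj p
  refine ⟨x, Subset.antisymm (fun p' hp' => ?_) ?_⟩
  · rw [D.proj_fst]
    exact D.injOn_proj (by rwa [mem_compl_iff, mem_preimage, hp']) hp hp'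
  · rw [D.proj_fst, singleton_subset_iff]
    rfl

lemma exists_lt_proj_eq_point (i : ι) :
    ∃ x y, x < y ∧ D.proj (D.center i, x) = D.point i ∧ D.proj (D.center i, y) = D.point i := by
  classical
  obtain ⟨τ, hτ⟩ := ratioBlowUp.exists_mem D.above_nonneg D.below_nonneg (D.point i)
  let e (r : unitInterval) : D.space := ⟨(D.point i, update τ i r), ratioBlowUp.update_mem hτ
    (by simp [point, above_curve]) (by simp [point, below_curve]) r⟩
  refine ⟨(flatten (e 0)).2, (flatten (e 1)).2, flatten_snd_lt rfl ?_, D.proj_flattenHomeo (e 0),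
    D.proj_flattenHomeo (e 1)⟩
  exact Prod.mk_lt_mk_iff_right.2 (update_lt_update_iff.2 zero_lt_one)

lemma exists_proj_preimage_eq_Icc (i : ι) :
    ∃ x₁ x₂, x₁ < x₂ ∧ D.proj ⁻¹' {D.point i} = {D.center i} ×ˢ Icc x₁ x₂ := by
  obtain ⟨x, y, hxy, hx, hy⟩ := D.exists_lt_proj_eq_point i
  let s : Set (Icc a b) := {x | D.proj (D.center i, x) = D.point i}
  have hclosed : IsClosed s := by
    have := D.continuous_proj
    exact isClosed_eq (by fun_prop) continuous_const
  have hconn : s.OrdConnected := by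
    refine ⟨fun u hu v hv w hw => Prod.ext (D.proj_fst _) (le_antisymm ?_ ?_)⟩
    · exact (D.monotone_proj _ hw.2).trans_eq (congrArg Prod.snd hv)
    · exact (congrArg Prod.snd hu).symm.trans_le (D.monotone_proj _ hw.1)
  obtain ⟨x₁, x₂, hs⟩ := exists_eq_Icc_of_isCompact hclosed.isCompact ⟨x, hx⟩ hconn
  have hxs : x ∈ Icc x₁ x₂ := hs ▸ hx
  have hys : y ∈ Icc x₁ x₂ := hs ▸ hy
  refine ⟨x₁, x₂, (hxs.1.trans_lt hxy).trans_le hys.2, ?_⟩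
  ext ⟨θ, w⟩
  rw [← hs, mem_preimage, mem_singleton_iff, mem_prod, mem_singleton_iff]
  constructor
  · intro h
    obtain rfl : θ = D.center i := (D.proj_fst (θ, w)).symm.trans (congrArg Prod.fst h)
    exact ⟨rfl, h⟩
  · rintro ⟨rfl, h⟩
    exact h

-- The `i`-th ratio along such a curve would be a continuous resolution of the sawtooth jump.
lemma not_curveGraph_subset_proj_preimage [Nonempty ι] {η : T1 → Icc a b} (hη : Continuous η) :
    ¬curveGraph η ⊆ D.proj ⁻¹' curveGraph D.curve := by
  intro h
  obtain ⟨i⟩ := ‹Nonempty ι›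
  let e (θ : T1) : D.space := D.flattenHomeo.symm (θ + D.center i, η (θ + D.center i))
  have he (θ : T1) : (e θ).1.1 = (θ + D.center i, D.curve (θ + D.center i)) := by
    have hθ : (e θ).1.1.1 = θ + D.center i := flattenHomeo_symm_fst _
    have hcurve : (e θ).1.1.2 = D.curve (e θ).1.1.1 := h rfl
    exact Prod.ext hθ (by rw [hcurve, hθ])
  refine not_exists_continuous_isRatio_sawBump ⟨fun θ => (e θ).1.2 i, by fun_prop, fun θ => ?_⟩
  simpa [he, above_curve, below_curve] using (e θ).2 i

end Projection

section Dynamics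

/-- `f` is a forced increasing map over the rotation by `ρ` that preserves the curve and permutes
the centers and the heights by `σ`, so that it lifts to the blown-up strip. -/
structure Equivariant (D : BlowUpData ι a b) (f : T1 × Icc a b → T1 × Icc a b) (ρ : T1)
    (σ : Equiv.Perm ι) : Prop where
  forcedIncreasing : ForcedIncreasing (fun θ => θ + ρ) f
  map_curve (θ : T1) : f (θ, D.curve θ) = (θ + ρ, D.curve (θ + ρ))
  center_apply (i : ι) : D.center (σ i) = D.center i + ρ
  height_apply (i : ι) (p : T1 × Icc a b) : D.height (σ i) (f p) = D.height i p

namespace Equivariant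

variable {f : T1 × Icc a b → T1 × Icc a b} {ρ : T1} {σ : Equiv.Perm ι}

lemma above_apply (h : D.Equivariant f ρ σ) (i : ι) (p : T1 × Icc a b) :
    D.above (σ i) (f p) = D.above i p := by
  simp [above, h.forcedIncreasing.2.1, h.center_apply, h.height_apply]

lemma below_apply (h : D.Equivariant f ρ σ) (i : ι) (p : T1 × Icc a b) :
    D.below (σ i) (f p) = D.below i p := by
  simp [below, h.forcedIncreasing.2.1, h.center_apply, h.height_apply]

/-- The lift of `f` to the blown-up strip. -/
def lift (h : D.Equivariant f ρ σ) : D.space → D.space :=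
  ratioBlowUp.map f σ h.above_apply h.below_apply

lemma vert_lift_lt (h : D.Equivariant f ρ σ) {e e' : D.space} (hθ : e.1.1.1 = e'.1.1.1)
    (hlt : vert e < vert e') : vert (h.lift e) < vert (h.lift e') := by
  obtain ⟨⟨⟨θ, x⟩, τ⟩, he⟩ := e
  obtain ⟨⟨⟨θ', x'⟩, τ'⟩, he'⟩ := e'
  obtain rfl : θ = θ' := hθ
  have hmono := h.forcedIncreasing.2.2 θ
  refine lt_of_le_of_ne ⟨hmono.monotone hlt.le.1, fun i => hlt.le.2 (σ.symm i)⟩ fun heq => ?_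
  have hx : x = x' := hmono.injective (Prod.ext_iff.1 heq).1
  have hτ : τ = τ' := σ.symm.surjective.injective_comp_right (Prod.ext_iff.1 heq).2
  exact hlt.ne (Prod.ext hx hτ)

variable [Encodable ι]

/-- The lift of `f` to the blown-up strip, identified with the strip. -/
def extension (h : D.Equivariant f ρ σ) (p : T1 × Icc a b) : T1 × Icc a b :=
  D.flattenHomeo (h.lift (D.flattenHomeo.symm p))

lemma extension_flattenHomeo (h : D.Equivariant f ρ σ) (e : D.space) :
    h.extension (D.flattenHomeo e) = D.flattenHomeo (h.lift e) := by
  rw [extension, Homeomorph.symm_apply_apply]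

lemma proj_extension (h : D.Equivariant f ρ σ) (p : T1 × Icc a b) :
    D.proj (h.extension p) = f (D.proj p) :=
  D.proj_flattenHomeo _

lemma forcedIncreasing_extension (h : D.Equivariant f ρ σ) :
    ForcedIncreasing (fun θ => θ + ρ) h.extension := by
  refine ⟨?_, fun p => ?_, fun θ x x' hx => ?_⟩
  · have : Continuous h.lift := ratioBlowUp.continuous_map h.forcedIncreasing.1 σ _ _
    unfold extension
    fun_prop
  · rw [← D.proj_fst, h.proj_extension, h.forcedIncreasing.2.1, D.proj_fst]
  · have hbase : (D.flattenHomeo.symm (θ, x)).1.1.1 = (D.flattenHomeo.symm (θ, x')).1.1.1 := by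
      rw [flattenHomeo_symm_fst, flattenHomeo_symm_fst]
    refine flatten_snd_lt ?_ (h.vert_lift_lt hbase (D.strictMono_vert θ hx))
    exact (h.forcedIncreasing.2.1 _).trans (by rw [hbase, ← h.forcedIncreasing.2.1]; rfl)

theorem blowUpConclusion [Nonempty ι] (h : D.Equivariant f ρ σ) :
    BlowUpConclusion (fun θ => θ + ρ) f D.curve h.extension D.proj := by
  have hrange : range D.point ⊆ curveGraph D.curve := range_subset_iff.2 fun _ => rfl
  refine ⟨⟨D.continuous_proj, D.surjective_proj, funext h.proj_extension⟩, D.proj_fst,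
    h.forcedIncreasing_extension, D.monotone_proj, ?_, ⟨range D.point, hrange,
    countable_range _, forall_mem_range.2 D.exists_proj_preimage_eq_Icc, fun p hp =>
      D.exists_proj_preimage_eq_singleton hp.2⟩,
    fun η hη => D.not_curveGraph_subset_proj_preimage hη⟩
  exact D.injOn_proj.mono (compl_subset_compl.2 (preimage_mono hrange))

end Equivariant

/-- The inclusion of the blown-up curve into the blown-up strip. -/
def curveLift (D : BlowUpData ι a b) : circleBlowUp D.center → D.space :=
  ratioBlowUp.map (fun θ => (θ, D.curve θ)) (Equiv.refl ι) D.above_curve D.below_curve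

lemma injective_curveLift : Injective D.curveLift := by
  intro e e' h
  exact Subtype.ext (Prod.ext (congrArg (fun e => e.1.1.1) h) (congrArg (fun e => e.1.2) h))

lemma Equivariant.lift_curveLift {f : T1 × Icc a b → T1 × Icc a b} {ρ : T1} {σ : Equiv.Perm ι}
    (h : D.Equivariant f ρ σ) (e : circleBlowUp D.center) :
    h.lift (D.curveLift e) = D.curveLift (circleBlowUp.rotate ρ h.center_apply e) :=
  Subtype.ext (Prod.ext (h.map_curve e.1.1) rfl)

variable [Encodable ι]

/-- The circle parametrizing the preimage of the curve under `D.proj`. -/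
def curveCircle (D : BlowUpData ι a b) (t : T1) : T1 × Icc a b :=
  D.flattenHomeo (D.curveLift ((circleBlowUp.homeoCircle D.injective_center).symm t))

lemma continuous_curveCircle : Continuous D.curveCircle := by
  have := D.continuous_curve
  have : Continuous D.curveLift := ratioBlowUp.continuous_map (by fun_prop) _ _ _
  unfold curveCircle
  fun_prop

lemma injective_curveCircle : Injective D.curveCircle :=
  D.flattenHomeo.injective.comp (injective_curveLift.comp (Homeomorph.injective _))

lemma range_curveCircle : range D.curveCircle = D.proj ⁻¹' curveGraph D.curve := by
  refine Subset.antisymm (range_subset_iff.2 fun t => ?_) fun p hp => ?_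
  · rw [mem_preimage, curveCircle, proj_flattenHomeo]
    rfl
  · let e := D.flattenHomeo.symm p
    have he : e.1.1.2 = D.curve e.1.1.1 := hp
    have he' : (e.1.1.1, D.curve e.1.1.1) = e.1.1 := Prod.ext rfl he.symm
    let e₀ : circleBlowUp D.center := ⟨(e.1.1.1, e.1.2), fun i => by
      have hi := e.2 i
      rwa [← he', D.above_curve, D.below_curve] at hi⟩
    have hlift : D.curveLift e₀ = e := Subtype.ext (Prod.ext he' rfl)
    refine ⟨circleBlowUp.homeoCircle D.injective_center e₀, ?_⟩
    rw [curveCircle, Homeomorph.symm_apply_apply, hlift, Homeomorph.apply_symm_apply]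

lemma Equivariant.extension_curveCircle {f : T1 × Icc a b → T1 × Icc a b} {ρ : T1}
    {σ : Equiv.Perm ι} (h : D.Equivariant f ρ σ) (t : T1) :
    h.extension (D.curveCircle t) =
      D.curveCircle (circleBlowUp.denjoyHomeo D.injective_center ρ h.center_apply t) := by
  rw [curveCircle, h.extension_flattenHomeo, h.lift_curveLift,
    ← circleBlowUp.homeoCircle_symm_denjoyHomeo, curveCircle]

end Dynamics

end BlowUpData

/-! ### Heights from the extended dynamics -/

lemma zpow_rel_iff {X : Type*} [TopologicalSpace X] {F : X ≃ₜ X} {r : X → X → Prop}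
    (h : ∀ x y, r (F x) (F y) ↔ r x y) (n : ℤ) (x y : X) :
    r ((F ^ n) x) ((F ^ n) y) ↔ r x y := by
  have hsucc (k : ℤ) (z : X) : (F ^ (k + 1)) z = F ((F ^ k) z) := by
    rw [add_comm, zpow_one_add, Homeomorph.mul_apply]
  induction n with
  | zero => rfl
  | succ k ih =>
    rw [hsucc, hsucc]
    exact (h _ _).trans ih
  | pred k ih =>
    rw [← h, ← hsucc, ← hsucc, sub_add_cancel]
    exact ih

section Skew

variable {Θ X Y : Type*} [TopologicalSpace Θ] [LinearOrder X] [TopologicalSpace X]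
  [OrderTopology X] [LinearOrder Y] [TopologicalSpace Y] [OrderClosedTopology Y]
  {φ : Θ × X → Y}

lemma continuous_of_strictMono_rightInverse {ψ : Θ × Y → X} (hφ : Continuous φ)
    (hmono : ∀ θ, StrictMono fun x => φ (θ, x)) (hψ : ∀ p, φ (p.1, ψ p) = p.2) :
    Continuous ψ := by
  refine OrderTopology.continuous_iff.2 fun x => ⟨?_, ?_⟩
  · convert isOpen_lt (f := fun p : Θ × Y => φ (p.1, x)) (g := Prod.snd) (by fun_prop)
      continuous_snd using 1
    ext p
    rw [mem_preimage, mem_Ioi, mem_ofPred_eq, ← (hmono p.1).lt_iff_lt, hψ]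
  · convert isOpen_lt (g := fun p : Θ × Y => φ (p.1, x)) (f := Prod.snd) continuous_snd
      (by fun_prop) using 1
    ext p
    rw [mem_preimage, mem_Iio, mem_ofPred_eq, ← (hmono p.1).lt_iff_lt, hψ]

variable (α : Θ ≃ₜ Θ) (hφ : Continuous φ) (hmono : ∀ θ, StrictMono fun x => φ (θ, x))
  (hsurj : ∀ θ, Surjective fun x => φ (θ, x))

/-- The skew product over `α` whose fibre maps are the increasing bijections `φ (θ, ·)`. -/
def skewHomeomorph : Θ × X ≃ₜ Θ × Y where
  toFun p := (α p.1, φ p)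
  invFun q := (α.symm q.1, surjInv (hsurj (α.symm q.1)) q.2)
  left_inv p := by
    refine Prod.ext (α.symm_apply_apply _) ((hmono p.1).injective ?_)
    simpa using surjInv_eq (hsurj p.1) (φ p)
  right_inv q := Prod.ext (α.apply_symm_apply _) (surjInv_eq (hsurj _) _)
  continuous_toFun := by fun_prop
  continuous_invFun := by
    have : Continuous fun p : Θ × Y => surjInv (hsurj p.1) p.2 :=
      continuous_of_strictMono_rightInverse hφ hmono fun p => surjInv_eq (hsurj p.1) p.2
    exact Continuous.prodMk (by fun_prop)
      (this.comp (f := fun q : Θ × Y => (α.symm q.1, q.2)) (by fun_prop))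

lemma skewHomeomorph_fibre_lt_iff (p q : Θ × X) :
    ((skewHomeomorph α hφ hmono hsurj p).1 = (skewHomeomorph α hφ hmono hsurj q).1 ∧
      (skewHomeomorph α hφ hmono hsurj p).2 < (skewHomeomorph α hφ hmono hsurj q).2) ↔
    p.1 = q.1 ∧ p.2 < q.2 := by
  obtain ⟨θ, x⟩ := p
  obtain ⟨θ', x'⟩ := q
  constructor
  · rintro ⟨hbase, hlt⟩
    obtain rfl : θ = θ' := α.injective hbase
    exact ⟨rfl, (hmono θ).lt_iff_lt.1 hlt⟩
  · rintro ⟨hbase, hlt⟩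
    obtain rfl : θ = θ' := hbase
    exact ⟨rfl, hmono θ hlt⟩

end Skew

section Height

variable {Θ : Type*} {a b : ℝ} (hab : a ≤ b)
  {f : Θ × Icc a b → Θ × Icc a b}

/-- The fibre maps of `f`, extended to `ℝ` by translations below `a` and above `b`. -/
def extendFibre (f : Θ × Icc a b → Θ × Icc a b) (p : Θ × ℝ) : ℝ :=
  (f (p.1, projIcc a b hab p.2)).2 + (p.2 - projIcc a b hab p.2)

lemma extendFibre_coe (p : Θ × Icc a b) : extendFibre hab f (p.1, p.2) = (f p).2 := by
  simp [extendFibre]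

lemma continuous_extendFibre [TopologicalSpace Θ] (hf : Continuous f) :
    Continuous (extendFibre hab f) := by
  have := continuous_projIcc (h := hab)
  unfold extendFibre
  fun_prop

lemma monotone_sub_projIcc : Monotone fun x : ℝ => x - projIcc a b hab x := by
  intro x x' h
  have hdist := (LipschitzWith.projIcc hab).dist_le_mul x' x
  have hproj : (projIcc a b hab x : ℝ) ≤ projIcc a b hab x' := monotone_projIcc hab h
  rw [Subtype.dist_eq, Real.dist_eq, Real.dist_eq, abs_of_nonneg (sub_nonneg.2 hproj),
    abs_of_nonneg (sub_nonneg.2 h), NNReal.coe_one, one_mul] at hdist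
  linarith

lemma strictMono_extendFibre {θ : Θ} (hf : StrictMono fun x => (f (θ, x)).2) :
    StrictMono fun x => extendFibre hab f (θ, x) := by
  intro x x' h
  rcases (monotone_projIcc hab h.le).eq_or_lt with heq | hlt
  · simpa only [extendFibre, heq, add_lt_add_iff_left, sub_lt_sub_iff_right] using h
  · exact add_lt_add_of_lt_of_le (hf hlt) (monotone_sub_projIcc hab h.le)

lemma surjective_extendFibre [TopologicalSpace Θ] (hf : Continuous f) (θ : Θ) :
    Surjective fun x => extendFibre hab f (θ, x) := by
  intro y
  have hcont := continuous_extendFibre hab hf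
  refine mem_range_of_exists_le_of_exists_ge (by fun_prop) ⟨y - (b - a), ?_⟩ ⟨y + (b - a), ?_⟩
  · have hx := (projIcc a b hab (y - (b - a))).2.1
    have hfx := (f (θ, projIcc a b hab (y - (b - a)))).2.2.2
    simp only [extendFibre]
    linarith
  · have hx := (projIcc a b hab (y + (b - a))).2.2
    have hfx := (f (θ, projIcc a b hab (y + (b - a)))).2.2.1
    simp only [extendFibre]
    linarith

variable [TopologicalSpace Θ] {α : Θ ≃ₜ Θ} (hf : ForcedIncreasing α f)

/-- The extension of `f` to a homeomorphism of `Θ × ℝ`. -/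
def extendHomeo : Θ × ℝ ≃ₜ Θ × ℝ :=
  skewHomeomorph α (continuous_extendFibre hab hf.1)
    (fun θ => strictMono_extendFibre hab (hf.2.2 θ)) (surjective_extendFibre hab hf.1)

lemma extendHomeo_coe (p : Θ × Icc a b) :
    extendHomeo hab hf (p.1, p.2) = ((f p).1, ((f p).2 : ℝ)) :=
  Prod.ext (hf.2.1 p).symm (extendFibre_coe hab p)

lemma extendHomeo_zpow_fibre_lt (n : ℤ) {p q : Θ × ℝ} (hbase : p.1 = q.1) (hlt : p.2 < q.2) :
    (((extendHomeo hab hf) ^ n) p).1 = (((extendHomeo hab hf) ^ n) q).1 ∧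
      (((extendHomeo hab hf) ^ n) p).2 < (((extendHomeo hab hf) ^ n) q).2 :=
  (zpow_rel_iff (r := fun p q => p.1 = q.1 ∧ p.2 < q.2)
    (skewHomeomorph_fibre_lt_iff _ _ _ _) n p q).2 ⟨hbase, hlt⟩

/-- The vertical distance from the curve `γ`, with sign, at time `-n`. -/
def orbitHeight (γ : Θ → Icc a b) (n : ℤ) (p : Θ × Icc a b) : ℝ :=
  ((extendHomeo hab hf ^ (-n)) (p.1, p.2)).2 - γ ((extendHomeo hab hf ^ (-n)) (p.1, p.2)).1

variable {γ : Θ → Icc a b}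

lemma continuous_orbitHeight (hγ : Continuous γ) (n : ℤ) :
    Continuous (orbitHeight hab hf γ n) := by
  have := (extendHomeo hab hf ^ (-n)).continuous
  unfold orbitHeight
  fun_prop

lemma strictMono_orbitHeight (n : ℤ) (θ : Θ) :
    StrictMono fun x => orbitHeight hab hf γ n (θ, x) := by
  intro x x' h
  obtain ⟨hbase, hlt⟩ := extendHomeo_zpow_fibre_lt hab hf (-n) (p := (θ, (x : ℝ)))
    (q := (θ, (x' : ℝ))) rfl h
  simpa only [orbitHeight, hbase, sub_lt_sub_iff_right] using hlt

lemma orbitHeight_add_one_apply (n : ℤ) (p : Θ × Icc a b) :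
    orbitHeight hab hf γ (n + 1) (f p) = orbitHeight hab hf γ n p := by
  have hiter : (extendHomeo hab hf ^ (-(n + 1))) ((f p).1, ((f p).2 : ℝ)) =
      (extendHomeo hab hf ^ (-n)) (p.1, (p.2 : ℝ)) := by
    rw [← extendHomeo_coe hab hf, ← Homeomorph.mul_apply, ← zpow_add_one, neg_add,
      neg_add_cancel_right]
  rw [orbitHeight, hiter, orbitHeight]

lemma extendHomeo_mem_curve_iff (hγ : ∀ θ, f (θ, γ θ) = (α θ, γ (α θ))) (p : Θ × ℝ) :
    (extendHomeo hab hf p).2 = γ (extendHomeo hab hf p).1 ↔ p.2 = γ p.1 := by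
  have hcurve : extendHomeo hab hf (p.1, γ p.1) = (α p.1, (γ (α p.1) : ℝ)) := by
    rw [extendHomeo_coe hab hf (p.1, γ p.1), hγ]
  constructor
  · intro h
    have hp : extendHomeo hab hf p = (α p.1, (γ (α p.1) : ℝ)) := Prod.ext rfl h
    exact (Prod.ext_iff.1 ((extendHomeo hab hf).injective (hp.trans hcurve.symm))).2
  · intro h
    rw [show p = (p.1, (γ p.1 : ℝ)) from Prod.ext rfl h, hcurve]

lemma orbitHeight_curve (hγ : ∀ θ, f (θ, γ θ) = (α θ, γ (α θ))) (n : ℤ) (θ : Θ) :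
    orbitHeight hab hf γ n (θ, γ θ) = 0 :=
  sub_eq_zero.2 <| (zpow_rel_iff (r := fun p _ : Θ × ℝ => p.2 = γ p.1)
    (fun p _ => extendHomeo_mem_curve_iff hab hf hγ p) (-n) (θ, (γ θ : ℝ)) (θ, (γ θ : ℝ))).2 rfl

end Height

namespace BlowUpData

variable {a b ρ : ℝ} {f : T1 × Icc a b → T1 × Icc a b} {γ : T1 → Icc a b}

/-- The blow-up data of an invariant curve of a quasiperiodically forced increasing map, with the
point of the curve over `0` and its orbit as the points to be blown up. -/
def ofOrbit (hρ : Irrational ρ) (hf : ForcedIncreasing (fun θ => θ + (ρ : T1)) f)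
    (hγc : Continuous γ) (hγint : ∀ θ, (γ θ : ℝ) ∈ Ioo a b)
    (hγ : ∀ θ, f (θ, γ θ) = (θ + (ρ : T1), γ (θ + (ρ : T1)))) : BlowUpData ℤ a b :=
  have hab : a ≤ b := (hγint 0).1.le.trans (hγint 0).2.le
  have hf' : ForcedIncreasing (Homeomorph.addRight (ρ : T1)) f := hf
  { curve := γ
    continuous_curve := hγc
    curve_mem_Ioo := hγint
    center n := n • (ρ : T1)
    injective_center := injective_zsmul_coe_of_irrational hρ
    height := orbitHeight hab hf' γ
    continuous_height := continuous_orbitHeight hab hf' hγc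
    strictMono_height := strictMono_orbitHeight hab hf'
    height_curve := orbitHeight_curve hab hf' hγ }

lemma equivariant_ofOrbit (hρ : Irrational ρ) (hf : ForcedIncreasing (fun θ => θ + (ρ : T1)) f)
    (hγc : Continuous γ) (hγint : ∀ θ, (γ θ : ℝ) ∈ Ioo a b)
    (hγ : ∀ θ, f (θ, γ θ) = (θ + (ρ : T1), γ (θ + (ρ : T1)))) :
    (ofOrbit hρ hf hγc hγint hγ).Equivariant f ρ (Equiv.addRight 1) where
  forcedIncreasing := hf
  map_curve := hγ
  center_apply n := add_one_zsmul _ n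
  height_apply := orbitHeight_add_one_apply _ hf

end BlowUpData

/-- in the blow-up construction, `h⁻¹(Γ)` is homeomorphic to the circle,
via a homeomorphism conjugating `f̂|_{h⁻¹(Γ)}` to a Denjoy-type circle homeomorphism. -/
theorem stmt12 {I : Set ℝ} (hIcomp : IsCompact I) (hIconn : I.OrdConnected)
    (ρ : ℝ) (hρ : Irrational ρ)
    (f : T1 × ↥I → T1 × ↥I) (hf : ForcedIncreasing (fun θ : T1 => θ + (ρ : T1)) f)
    (γ : T1 → ↥I) (hγc : Continuous γ) (hγint : ∀ θ : T1, (γ θ : ℝ) ∈ interior I)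
    (hγinv : ∀ θ : T1, f (θ, γ θ) = (θ + (ρ : T1), γ (θ + (ρ : T1)))) :
    ∃ fhat h : T1 × ↥I → T1 × ↥I,
      BlowUpConclusion (fun θ : T1 => θ + (ρ : T1)) f γ fhat h ∧
      ∃ ξ : T1 → T1 × ↥I, Continuous ξ ∧ Injective ξ ∧
        Set.range ξ = h ⁻¹' curveGraph γ ∧
        ∃ g : T1 ≃ₜ T1, DenjoyType g ∧ ∀ t : T1, fhat (ξ t) = ξ (g t) := by
  obtain ⟨a, b, rfl⟩ := exists_eq_Icc_of_isCompact hIcomp ⟨_, (γ 0).2⟩ hIconn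
  rw [interior_Icc] at hγint
  let D := BlowUpData.ofOrbit hρ hf hγc hγint hγinv
  have hD : D.Equivariant f ρ (Equiv.addRight 1) :=
    BlowUpData.equivariant_ofOrbit hρ hf hγc hγint hγinv
  exact ⟨hD.extension, D.proj, hD.blowUpConclusion, D.curveCircle,
    BlowUpData.continuous_curveCircle, BlowUpData.injective_curveCircle,
    BlowUpData.range_curveCircle, circleBlowUp.denjoyHomeo D.injective_center ρ hD.center_apply,
    circleBlowUp.denjoyType_denjoyHomeo D.injective_center hρ hD.center_apply,
    hD.extension_curveCircle⟩

end
end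

section
/- Let R be an irrational rotation of T¹ with rotation number ρ, and let f₀ be a circle homeomorphism of Denjoy type with irrational rotation number β and unique minimal set the Cantor set M̂ ⊆ T¹, where 1, ρ, β are rationally independent. Then the direct product F = R × f₀ on T² = T¹ × T¹ has a unique minimal set, namely M = T¹ × M̂; M is not pinched (M_θ = M̂ is uncountable for every θ), but M is almost automorphic: the irrational translation (θ,x) ↦ (θ+ρ, x+β) of T² is an almost periodic almost 1-1 factor of F|_M. -/
open Set Function MeasureTheory

noncomputable section

/-!
Poincaré's theorem gives a monotone degree one semiconjugacy `h` from `f₀` to the rotation by `β`,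
and `h` fails to be injective over countably many points only; hence `id × h` is an almost 1-1
factor map from `F` onto the translation by `(ρ, β)`, which is minimal by Kronecker's theorem. A
nonempty closed `F`-invariant set `A` therefore projects onto the whole torus. Over a point with a
single `h`-preimage `x` this forces `T¹ × {x} ⊆ A`, so the points `z ∈ M̂` with `T¹ × {z} ⊆ A` form
a nonempty closed `f₀`-invariant set. By minimality of `M̂` it is all of `M̂`, that is,
`T¹ × M̂ ⊆ A`: among the nonempty closed invariant sets of `F` there is a least one.

Kronecker's theorem is obtained from unique ergodicity: the Fourier coefficients of a measure
invariant under a rationally independent translation vanish except at `0`, so Haar measure of the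
closed subgroup generated by the translation vector is Haar measure of the torus.
-/

section InvariantMeasure

open Measure

theorem exists_isProbabilityMeasure_isAddHaarMeasure (G : Type*) [AddGroup G] [TopologicalSpace G]
    [IsTopologicalAddGroup G] [CompactSpace G] [MeasurableSpace G] [BorelSpace G] :
    ∃ μ : Measure G, IsProbabilityMeasure μ ∧ IsAddHaarMeasure μ :=
  ⟨addHaarMeasure ⊤, ⟨addHaarMeasure_self⟩, inferInstance⟩

variable {G : Type*} [AddCommGroup G] [TopologicalSpace G] [IsTopologicalAddGroup G]
  [CompactSpace G] [MeasurableSpace G] [BorelSpace G]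

theorem exists_map_add_right_eq_self_and_closure_zmultiples (a : G) :
    ∃ μ : Measure G, IsProbabilityMeasure μ ∧ μ.map (· + a) = μ ∧
      μ (closure (AddSubgroup.zmultiples a))ᶜ = 0 := by
  let H := (AddSubgroup.zmultiples a).topologicalClosure
  have hH : IsClosed (H : Set G) := AddSubgroup.isClosed_topologicalClosure _
  have : CompactSpace H := isCompact_iff_compactSpace.1 hH.isCompact
  obtain ⟨m, _, _⟩ := exists_isProbabilityMeasure_isAddHaarMeasure H
  have ha : a ∈ H := AddSubgroup.le_topologicalClosure _ (AddSubgroup.mem_zmultiples a)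
  refine ⟨m.map (↑), isProbabilityMeasure_map (by fun_prop), ?_, ?_⟩
  · conv_rhs => rw [← map_add_right_eq_self m ⟨a, ha⟩]
    rw [map_map (by fun_prop) (by fun_prop), map_map (by fun_prop) (by fun_prop)]
    rfl
  · rw [map_apply (by fun_prop) (isClosed_closure.measurableSet.compl)]
    convert measure_empty (μ := m)
    exact eq_empty_of_forall_notMem fun x hx ↦ hx x.2

theorem denseRange_nsmul_of_forall_measure_eq {a : G}
    (h : ∀ μ ν : Measure G, IsProbabilityMeasure μ → IsProbabilityMeasure ν →
      μ.map (· + a) = μ → ν.map (· + a) = ν → μ = ν) :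
    DenseRange (fun n : ℕ ↦ n • a) := by
  obtain ⟨μ, hμ, hμa, hμ₀⟩ := exists_map_add_right_eq_self_and_closure_zmultiples a
  obtain ⟨ν, hν, _⟩ := exists_isProbabilityMeasure_isAddHaarMeasure G
  rw [h μ ν hμ hν hμa (map_add_right_eq_self ν a),
    isClosed_closure.isOpen_compl.measure_eq_zero_iff ν, compl_empty_iff] at hμ₀
  exact denseRange_zsmul_iff_nsmul.1 (dense_iff_closure_eq.2 hμ₀)

end InvariantMeasure

theorem integral_eq_integral_of_mem_span {X : Type*} [TopologicalSpace X] [CompactSpace X]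
    [MeasurableSpace X] [OpensMeasurableSpace X] {μ ν : Measure X} [IsFiniteMeasure μ]
    [IsFiniteMeasure ν] {S : Set C(X, ℂ)} (h : ∀ f ∈ S, ∫ x, f x ∂μ = ∫ x, f x ∂ν) {f : C(X, ℂ)}
    (hf : f ∈ Submodule.span ℂ S) : ∫ x, f x ∂μ = ∫ x, f x ∂ν := by
  have hint (κ : Measure X) [IsFiniteMeasure κ] (f : C(X, ℂ)) : Integrable f κ :=
    f.continuous.integrable_of_hasCompactSupport (.of_compactSpace f)
  induction hf using Submodule.span_induction with
  | mem f hf => exact h f hf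
  | zero => simp
  | add f₁ f₂ _ _ h₁ h₂ =>
    simp only [ContinuousMap.add_apply]
    rw [integral_add (hint μ f₁) (hint μ f₂), integral_add (hint ν f₁) (hint ν f₂), h₁, h₂]
  | smul c f _ hf => simp only [ContinuousMap.smul_apply, integral_smul, hf]

section FourierCoefficients

open UnitAddTorus BoundedContinuousFunction

variable {d : Type*} [Fintype d]

theorem mFourier_apply_eq_toCircle_sum (n : d → ℤ) (x : UnitAddTorus d) :
    mFourier n x = (∑ i, n i • x i : UnitAddCircle).toCircle := by
  have h := map_prod (Circle.coeHom.comp AddCircle.toCircle_addChar.toMonoidHom)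
    (fun i ↦ Multiplicative.ofAdd (n i • x i)) Finset.univ
  exact h.symm

theorem mFourier_apply_add (n : d → ℤ) (x y : UnitAddTorus d) :
    mFourier n (x + y) = mFourier n x * mFourier n y := by
  simp only [mFourier_apply_eq_toCircle_sum, Pi.add_apply, smul_add, Finset.sum_add_distrib,
    AddCircle.toCircle_add, Circle.coe_mul]

theorem mFourier_apply_ne_one {a : UnitAddTorus d} (ha : LinearIndependent ℤ a) {n : d → ℤ}
    (hn : n ≠ 0) : mFourier n a ≠ 1 := by
  rw [mFourier_apply_eq_toCircle_sum, ← Circle.coe_one, Ne, Circle.coe_inj,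
    ← AddCircle.toCircle_zero, (AddCircle.injective_toCircle one_ne_zero).eq_iff]
  exact fun h ↦ hn (funext (Fintype.linearIndependent_iff.1 ha n h))

theorem integral_mFourier_eq_zero {μ : Measure (UnitAddTorus d)} {a : UnitAddTorus d}
    (hμ : μ.map (· + a) = μ) {n : d → ℤ} (hn : mFourier n a ≠ 1) :
    ∫ x, mFourier n x ∂μ = 0 := by
  have h : ∫ x, mFourier n x ∂μ = (∫ x, mFourier n x ∂μ) * mFourier n a := by
    conv_lhs => rw [← hμ]
    rw [integral_map (by fun_prop) (by fun_prop), ← integral_mul_const]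
    simp only [mFourier_apply_add]
  exact by_contra fun h₀ ↦ hn ((left_eq_mul₀ h₀).1 h)

theorem ext_of_integral_mFourier_eq {μ ν : Measure (UnitAddTorus d)} [IsFiniteMeasure μ]
    [IsFiniteMeasure ν] (h : ∀ n, ∫ x, mFourier n x ∂μ = ∫ x, mFourier n x ∂ν) : μ = ν := by
  refine ext_of_forall_mem_subalgebra_integral_eq_of_polish (𝕜 := ℂ)
    (A := (mFourierSubalgebra d).comap (toContinuousMapStarₐ ℂ)) ?_ fun g hg ↦ ?_
  · refine Subalgebra.separatesPoints_monotone (fun g hg ↦ ?_) mFourierSubalgebra_separatesPoints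
    exact ⟨mkOfCompact g, hg, rfl⟩
  · exact integral_eq_integral_of_mem_span (forall_mem_range.2 h) (mFourierSubalgebra_coe.le hg)

end FourierCoefficients

theorem measure_eq_of_map_add_right_eq_self {d : Type*} [Finite d]
    {μ ν : Measure (UnitAddTorus d)} [IsProbabilityMeasure μ] [IsProbabilityMeasure ν]
    {a : UnitAddTorus d} (ha : LinearIndependent ℤ a) (hμ : μ.map (· + a) = μ)
    (hν : ν.map (· + a) = ν) : μ = ν := by
  cases nonempty_fintype d
  refine ext_of_integral_mFourier_eq fun n ↦ ?_
  rcases eq_or_ne n 0 with rfl | hn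
  · simp [UnitAddTorus.mFourier_zero]
  · rw [integral_mFourier_eq_zero hμ (mFourier_apply_ne_one ha hn),
      integral_mFourier_eq_zero hν (mFourier_apply_ne_one ha hn)]

theorem denseRange_nsmul_of_linearIndependent {d : Type*} [Finite d] {a : UnitAddTorus d}
    (ha : LinearIndependent ℤ a) : DenseRange (fun n : ℕ ↦ n • a) :=
  denseRange_nsmul_of_forall_measure_eq fun _ _ _ _ hμ hν ↦
    measure_eq_of_map_add_right_eq_self ha hμ hν

theorem linearIndependent_coe_addCircle {n : ℕ} {v : Fin n → ℝ}
    (hv : LinearIndependent ℚ (Fin.cons 1 v : Fin (n + 1) → ℝ)) :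
    LinearIndependent ℤ (fun i ↦ (v i : UnitAddCircle)) := by
  refine Fintype.linearIndependent_iff.2 fun g hg i ↦ ?_
  have hsum : ((∑ i, g i • v i : ℝ) : UnitAddCircle) = 0 := by
    rw [← hg, ← QuotientAddGroup.mk'_apply, map_sum]
    rfl
  obtain ⟨k, hk⟩ := (AddCircle.coe_eq_zero_iff 1).1 hsum
  have hv' : LinearIndependent ℤ (Fin.cons 1 v : Fin (n + 1) → ℝ) := hv.restrict_scalars' ℤ
  refine Fintype.linearIndependent_iff.1 hv' (Fin.cons (-k) g) ?_ i.succ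
  simp only [Fin.sum_univ_succ, Fin.cons_zero, Fin.cons_succ, ← hk, neg_smul, neg_add_cancel]

theorem irrational_of_linearIndependent_cons {n : ℕ} {v : Fin n → ℝ}
    (hv : LinearIndependent ℚ (Fin.cons 1 v : Fin (n + 1) → ℝ)) (i : Fin n) :
    Irrational (v i) := by
  have hpair : LinearIndepOn ℚ (Fin.cons 1 v : Fin (n + 1) → ℝ) {0, i.succ} :=
    hv.linearIndepOn _
  rw [LinearIndepOn.pair_iff _ (Fin.succ_ne_zero i).symm] at hpair
  rintro ⟨q, hq⟩
  simpa using hpair q (-1) (by simp [hq, Rat.smul_def])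

theorem denseRange_nsmul_coe_prod {x y : ℝ} (h : LinearIndependent ℚ ![1, x, y]) :
    DenseRange (fun n : ℕ ↦ n • ((x : UnitAddCircle), (y : UnitAddCircle))) :=
  Homeomorph.finTwoArrow.surjective.denseRange.comp
    (denseRange_nsmul_of_linearIndependent (linearIndependent_coe_addCircle h))
    Homeomorph.finTwoArrow.continuous

section ClosedInvariantSets

variable {X : Type*} [TopologicalSpace X] {f : X → X}

/-- The nonempty closed sets that `f` maps into themselves; the minimal sets of `f` are their
minimal elements (`isMinimalSet_iff_minimal`), and `f` is a minimal map when `univ` is the least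
of them. -/
def closedInvariantSets (f : X → X) : Set (Set X) :=
  {A | A.Nonempty ∧ IsClosed A ∧ f '' A ⊆ A}

theorem isMinimalSet_iff_minimal [CompactSpace X] [T2Space X] (hf : Continuous f) {M : Set X} :
    IsMinimalSet f M ↔ Minimal (· ∈ closedInvariantSets f) M := by
  constructor
  · rintro ⟨hne, hcl, hinv, hmin⟩
    exact ⟨⟨hne, hcl, hinv.subset⟩, fun A ⟨hA, hAcl, hAinv⟩ hAM ↦ (hmin A hAM hA hAcl hAinv).ge⟩
  · rintro ⟨⟨hne, hcl, hinv⟩, hmin⟩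
    have himage : f '' M ∈ closedInvariantSets f :=
      ⟨hne.image f, (hcl.isCompact.image hf).isClosed, image_mono hinv⟩
    exact ⟨hne, hcl, hinv.antisymm (hmin himage hinv),
      fun A hAM hA hAcl hAinv ↦ hAM.antisymm (hmin ⟨hA, hAcl, hAinv⟩ hAM)⟩

theorem isLeast_closedInvariantSets_add_right {G : Type*} [AddCommGroup G] [TopologicalSpace G]
    [IsTopologicalAddGroup G] {a : G} (ha : DenseRange (fun n : ℕ ↦ n • a)) :
    IsLeast (closedInvariantSets (· + a)) univ := by
  refine ⟨⟨univ_nonempty, isClosed_univ, subset_univ _⟩, fun A ⟨⟨x, hx⟩, hcl, hinv⟩ ↦ ?_⟩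
  have hdense : Dense (range fun n : ℕ ↦ x + n • a) :=
    (Homeomorph.addLeft x).surjective.denseRange.comp ha (Homeomorph.addLeft x).continuous
  rw [univ_subset_iff, ← hcl.closure_eq]
  refine (hdense.mono (range_subset_iff.2 fun n ↦ ?_)).closure_eq
  induction n with
  | zero => simpa using hx
  | succ n ih => simpa only [succ_nsmul, add_assoc] using hinv ⟨_, ih, rfl⟩

end ClosedInvariantSets

section IsFactorMap

variable {X Y : Type*} [TopologicalSpace X] [TopologicalSpace Y] {f : X → X} {g : Y → Y}
  {h : X → Y}

theorem IsFactorMap.prodMap_id (hh : IsFactorMap f g h) {Θ : Type*} [TopologicalSpace Θ]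
    (α : Θ → Θ) : IsFactorMap (Prod.map α f) (Prod.map α g) (Prod.map id h) :=
  ⟨continuous_id.prodMap hh.1, surjective_id.prodMap hh.2.1,
    by rw [Prod.map_comp_map, Prod.map_comp_map, hh.2.2]; rfl⟩

theorem IsFactorMap.image_eq_univ [CompactSpace X] [T2Space Y] (hh : IsFactorMap f g h)
    (hg : IsLeast (closedInvariantSets g) univ) {A : Set X} (hA : A ∈ closedInvariantSets f) :
    h '' A = univ := by
  obtain ⟨hne, hcl, hinv⟩ := hA
  refine univ_subset_iff.1 (hg.2 ⟨hne.image h, (hcl.isCompact.image hh.1).isClosed, ?_⟩)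
  rw [← image_comp, ← hh.2.2, image_comp]
  exact image_mono hinv

theorem IsFactorMap.domRestrict (hh : IsFactorMap f g h) {M : Set X} (hM : MapsTo f M M)
    (hMh : h '' M = univ) : IsFactorMap (restrictMap hM) g (M.domRestrict h) := by
  refine ⟨hh.1.comp continuous_subtype_val, ?_, funext fun x ↦ congrFun hh.2.2 x⟩
  rw [← range_eq_univ, range_domRestrict, hMh]

end IsFactorMap

section AlmostOneOne

theorem existsUnique_prodMap_id_eq_iff {Θ X Y : Type*} {h : X → Y} {p : Θ × Y} :
    (∃! q : Θ × X, Prod.map id h q = p) ↔ ∃! x, h x = p.2 := by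
  obtain ⟨θ, y⟩ := p
  constructor
  · rintro ⟨⟨θ', x⟩, hx, hunique⟩
    obtain ⟨rfl, hx⟩ := Prod.ext_iff.1 hx
    exact ⟨x, hx, fun x' hx' ↦ congrArg Prod.snd (hunique (θ', x') (Prod.ext rfl hx'))⟩
  · rintro ⟨x, hx, hunique⟩
    refine ⟨(θ, x), Prod.ext rfl hx, ?_⟩
    rintro ⟨θ', x'⟩ hx'
    obtain ⟨rfl, hx'⟩ := Prod.ext_iff.1 hx'
    exact Prod.ext rfl (hunique x' hx')

theorem mem_of_existsUnique_of_image_eq_univ {X Y : Type*} {h : X → Y} {x : X}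
    (hx : ∃! x', h x' = h x) {A : Set X} (hA : h '' A = univ) : x ∈ A := by
  obtain ⟨x', hx'A, hx'⟩ := hA.ge (mem_univ (h x))
  exact hx.unique hx' rfl ▸ hx'A

variable {X Y : Type*} [TopologicalSpace Y] {h : X → Y}

theorem AlmostOneOne.prodMap_id (hh : AlmostOneOne h) (Θ : Type*) [TopologicalSpace Θ] :
    AlmostOneOne (Prod.map id h : Θ × X → Θ × Y) :=
  (dense_univ.prod hh).mono fun _ hp ↦ existsUnique_prodMap_id_eq_iff.2 hp.2

theorem AlmostOneOne.domRestrict (hh : AlmostOneOne h) {M : Set X} (hMh : h '' M = univ) :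
    AlmostOneOne (M.domRestrict h) := by
  refine hh.mono ?_
  rintro y ⟨x, rfl, hunique⟩
  exact ⟨⟨x, mem_of_existsUnique_of_image_eq_univ ⟨x, rfl, hunique⟩ hMh⟩, rfl,
    fun w hw ↦ Subtype.ext (hunique w hw)⟩

end AlmostOneOne

section Product

variable {Θ X Y : Type*} [TopologicalSpace Θ] [TopologicalSpace X] [TopologicalSpace Y]
  {α : Θ → Θ} {f : X → X} {g : Y → Y} {h : X → Y}

theorem univ_prod_mem_closedInvariantSets [Nonempty Θ] (α : Θ → Θ) {M : Set X}
    (hM : M ∈ closedInvariantSets f) : univ ×ˢ M ∈ closedInvariantSets (Prod.map α f) := by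
  refine ⟨univ_nonempty.prod hM.1, isClosed_univ.prod hM.2.1, ?_⟩
  rw [prodMap_image_prod]
  exact prod_mono (subset_univ _) hM.2.2

theorem isLeast_closedInvariantSets_univ_prod [Nonempty Θ] [CompactSpace Θ] [CompactSpace X]
    [T2Space Θ] [T2Space Y] (hα : Surjective α) (hh : IsFactorMap f g h)
    (hone : ∃ y, ∃! x, h x = y) (hg : IsLeast (closedInvariantSets (Prod.map α g)) univ)
    {M : Set X} (hM : Minimal (· ∈ closedInvariantSets f) M) :
    IsLeast (closedInvariantSets (Prod.map α f)) (univ ×ˢ M) := by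
  obtain ⟨_, x, rfl, hx⟩ := hone
  have hmem {A : Set (Θ × X)} (hA : A ∈ closedInvariantSets (Prod.map α f)) (θ : Θ) :
      (θ, x) ∈ A :=
    mem_of_existsUnique_of_image_eq_univ (existsUnique_prodMap_id_eq_iff.2 ⟨x, rfl, hx⟩)
      ((hh.prodMap_id α).image_eq_univ hg hA)
  have hM' := univ_prod_mem_closedInvariantSets α hM.prop
  refine ⟨hM', fun A hA ↦ ?_⟩
  -- The points of `M` whose whole fibre `Θ × {z}` lies in `A` form a closed invariant set.
  have hcore : M ∩ ⋂ θ, Prod.mk θ ⁻¹' A ∈ closedInvariantSets f := by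
    refine ⟨⟨x, (hmem hM' (Classical.arbitrary Θ)).2, mem_iInter.2 (hmem hA)⟩,
      hM.prop.2.1.inter (isClosed_iInter fun θ ↦ hA.2.1.preimage (by fun_prop)), ?_⟩
    rintro _ ⟨z, ⟨hzM, hzA⟩, rfl⟩
    refine ⟨hM.prop.2.2 ⟨z, hzM, rfl⟩, mem_iInter.2 (hα.forall.2 fun θ ↦ ?_)⟩
    exact hA.2.2 ⟨(θ, z), mem_iInter.1 hzA θ, rfl⟩
  rintro ⟨θ, z⟩ ⟨-, hz⟩
  exact mem_iInter.1 (hM.le_of_le hcore inter_subset_left hz).2 θ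

end Product

section DenseStabilizer

open scoped Pointwise

theorem dense_of_dense_stabilizer {G : Type*} [AddGroup G] [TopologicalSpace G] [ContinuousAdd G]
    {S : Set G} (hS : S.Nonempty) (hdense : Dense (AddAction.stabilizer G S : Set G)) :
    Dense S := by
  obtain ⟨x, hx⟩ := hS
  refine ((Homeomorph.addRight x).surjective.denseRange.dense_image
    (Homeomorph.addRight x).continuous hdense).mono ?_
  rintro _ ⟨c, hc, rfl⟩
  exact (AddAction.mem_stabilizer_iff.1 hc).subset (vadd_mem_vadd_set hx)

theorem denseRange_of_semiconj_add_left {F H : CircleDeg1Lift} (hF : Surjective F) {β : ℝ}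
    (hβ : Irrational β) (hH : Semiconj H F (β + ·)) : DenseRange H := by
  refine dense_of_dense_stabilizer (range_nonempty H) ?_
  refine (dense_addSubgroupClosure_pair_iff (a := β) (b := 1).2 (by rwa [div_one])).mono ?_
  rw [SetLike.coe_subset_coe, AddSubgroup.closure_le, pair_subset_iff]
  constructor
  · change β +ᵥ range H = range H
    rw [← image_vadd, ← range_comp, ← hF.range_comp H, hH.comp_eq]
    rfl
  · change (1 : ℝ) +ᵥ range H = range H
    rw [← image_vadd, ← range_comp, ← (AddGroup.addLeft_bijective (1 : ℝ)).surjective.range_comp H]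
    exact congrArg range (funext fun t ↦ (H.map_one_add t).symm)

theorem exists_continuous_semiconj_add_translationNumber {F : CircleDeg1Lift} (hF : Bijective F)
    (hirr : Irrational F.translationNumber) :
    ∃ H : CircleDeg1Lift, Continuous H ∧ Semiconj H F (F.translationNumber + ·) := by
  set β := F.translationNumber
  let Tβ : CircleDeg1Liftˣ := CircleDeg1Lift.translate (Multiplicative.ofAdd β)
  obtain ⟨H, hH⟩ := CircleDeg1Lift.semiconj_of_bijective_of_translationNumber_eq hF
    (CircleDeg1Lift.isUnit_iff_bijective.1 Tβ.isUnit)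
    (CircleDeg1Lift.translationNumber_translate β).symm
  exact ⟨H, H.monotone.continuous_of_denseRange
    (denseRange_of_semiconj_add_left hF.surjective hirr hH), hH⟩

end DenseStabilizer

section InducedCircleMap

/-- The degree one map of the circle `ℝ/ℤ` induced by a `CircleDeg1Lift` of the line. -/
def inducedCircleMap (H : CircleDeg1Lift) : UnitAddCircle → UnitAddCircle :=
  Function.Periodic.lift (f := fun t : ℝ ↦ (H t : UnitAddCircle)) (c := 1) fun t ↦ by
    simp only [H.map_add_one, AddCircle.coe_add_period]

variable {F H : CircleDeg1Lift}

theorem eq_inducedCircleMap_iff {f : UnitAddCircle → UnitAddCircle} :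
    f = inducedCircleMap H ↔ ∀ t : ℝ, (H t : UnitAddCircle) = f t := by
  refine ⟨by rintro rfl t; rfl, fun h ↦ funext fun x ↦ ?_⟩
  induction x using QuotientAddGroup.induction_on with
  | H t => exact (h t).symm

theorem coe_unitAddCircle_eq_coe_iff {s t : ℝ} :
    (s : UnitAddCircle) = t ↔ ∃ k : ℤ, s = t + k := by
  rw [← sub_eq_zero, ← AddCircle.coe_sub, AddCircle.coe_eq_zero_iff]
  simp [eq_comm, sub_eq_iff_eq_add, add_comm]

theorem inducedCircleMap_eq_coe_iff {x : UnitAddCircle} {y : ℝ} :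
    inducedCircleMap H x = y ↔ ∃ t : ℝ, (t : UnitAddCircle) = x ∧ H t = y := by
  constructor
  · induction x using QuotientAddGroup.induction_on with | H t
    intro h
    obtain ⟨k, hk⟩ := coe_unitAddCircle_eq_coe_iff.1 h
    refine ⟨t - k, coe_unitAddCircle_eq_coe_iff.2 ⟨-k, by simp [sub_eq_add_neg]⟩, ?_⟩
    rw [H.map_sub_int, hk, add_sub_cancel_right]
  · rintro ⟨t, rfl, rfl⟩
    rfl

theorem continuous_inducedCircleMap (hH : Continuous H) : Continuous (inducedCircleMap H) :=
  ((AddCircle.continuous_mk' 1).comp hH).quotient_lift _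

theorem surjective_inducedCircleMap (hH : Surjective H) : Surjective (inducedCircleMap H) := by
  intro y
  induction y using QuotientAddGroup.induction_on with | H y
  obtain ⟨t, rfl⟩ := hH y
  exact ⟨t, rfl⟩

theorem bijective_of_bijective_inducedCircleMap (h : Bijective (inducedCircleMap H)) :
    Bijective H := by
  refine ⟨fun s t hst ↦ ?_, fun y ↦ ?_⟩
  · obtain ⟨k, rfl⟩ := coe_unitAddCircle_eq_coe_iff.1
      (h.injective (congrArg ((↑) : ℝ → UnitAddCircle) hst))
    rw [H.map_add_int, add_eq_left] at hst
    rw [hst, add_zero]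
  · obtain ⟨x, hx⟩ := h.surjective (y : UnitAddCircle)
    obtain ⟨t, -, ht⟩ := inducedCircleMap_eq_coe_iff.1 hx
    exact ⟨t, ht⟩

theorem existsUnique_inducedCircleMap_eq_coe {y : ℝ} (h : ∃! t, H t = y) :
    ∃! x, inducedCircleMap H x = y := by
  obtain ⟨t, ht, hunique⟩ := h
  refine ⟨t, inducedCircleMap_eq_coe_iff.2 ⟨t, rfl, ht⟩, fun x hx ↦ ?_⟩
  obtain ⟨s, rfl, hs⟩ := inducedCircleMap_eq_coe_iff.1 hx
  rw [hunique s hs]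

theorem countable_setOf_not_existsUnique_eq {f : ℝ → ℝ} (hf : Monotone f) (hsurj : Surjective f) :
    {y | ¬ ∃! t, f t = y}.Countable := by
  refine hf.countable_setOfPred_two_preimages.mono fun y hy ↦ ?_
  obtain ⟨s, hs⟩ := hsurj y
  obtain ⟨t, ht, hne⟩ : ∃ t, f t = y ∧ t ≠ s := by
    by_contra! h
    exact hy ⟨s, hs, h⟩
  exact hne.lt_or_gt.elim (fun hlt ↦ ⟨t, s, hlt, ht, hs⟩) fun hgt ↦ ⟨s, t, hgt, hs, ht⟩

theorem almostOneOne_inducedCircleMap (hH : Surjective H) : AlmostOneOne (inducedCircleMap H) := by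
  have hdense : Dense {y | ∃! t, H t = y} := by
    simpa only [compl_ofPred, not_not] using
      (countable_setOf_not_existsUnique_eq H.monotone hH).dense_compl ℝ
  refine (QuotientAddGroup.mk_surjective.denseRange.dense_image
    (AddCircle.continuous_mk' 1) hdense).mono ?_
  rintro _ ⟨y, hy, rfl⟩
  exact existsUnique_inducedCircleMap_eq_coe hy

theorem exists_isFactorMap_add_translationNumber (hF : Bijective (inducedCircleMap F))
    (hirr : Irrational F.translationNumber) :
    ∃ h : UnitAddCircle → UnitAddCircle,
      IsFactorMap (inducedCircleMap F) (· + (F.translationNumber : UnitAddCircle)) h ∧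
      AlmostOneOne h := by
  obtain ⟨H, hcont, hH⟩ := exists_continuous_semiconj_add_translationNumber
    (bijective_of_bijective_inducedCircleMap hF) hirr
  have hsurj : Surjective H := H.continuous_iff_surjective.1 hcont
  refine ⟨inducedCircleMap H, ⟨continuous_inducedCircleMap hcont,
    surjective_inducedCircleMap hsurj, funext fun x ↦ ?_⟩, almostOneOne_inducedCircleMap hsurj⟩
  induction x using QuotientAddGroup.induction_on with | H t
  change ((H (F t) : ℝ) : UnitAddCircle) = (H t : UnitAddCircle) + F.translationNumber
  rw [hH t, AddCircle.coe_add, add_comm]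

end InducedCircleMap

theorem pinched_univ_prod_iff {Θ X : Type*} [Nonempty Θ] {M : Set X} :
    Pinched (univ ×ˢ M : Set (Θ × X)) ↔ ∃! x, x ∈ M := by
  simp [Pinched]

theorem almostPeriodicMap_of_isometry {Y : Type*} [MetricSpace Y] {g : Y → Y} (hg : Isometry g) :
    AlmostPeriodicMap g := by
  have hiter (n : ℕ) : Isometry g^[n] := by
    induction n with
    | zero => exact isometry_id
    | succ n ih => exact ih.comp hg
  exact fun ε hε ↦ ⟨ε, hε, fun y y' hy n ↦ by rwa [(hiter n).dist_eq]⟩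

instance uncountable_addCircle (p : ℝ) [hp : Fact (0 < p)] : Uncountable (AddCircle p) := by
  rw [← Cardinal.aleph0_lt_mk_iff, Cardinal.mk_congr (AddCircle.equivIco p 0),
    Cardinal.mk_Ico_real (lt_add_of_pos_right 0 hp.out)]
  exact Cardinal.aleph0_lt_continuum

theorem stmt17_general (ρ β : ℝ) (hindep : LinearIndependent ℚ ![(1 : ℝ), ρ, β])
    (f₀ : T1 ≃ₜ T1)
    (hβ : ∃ F : CircleDeg1Lift, (∀ t : ℝ, ((F t : ℝ) : T1) = f₀ ((t : ℝ) : T1)) ∧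
      F.translationNumber = β)
    (Mhat : Set T1) (hMmin : IsMinimalSet (⇑f₀) Mhat)
    (F : T1 × T1 → T1 × T1) (hF : F = fun p : T1 × T1 => (p.1 + (ρ : T1), f₀ p.2)) :
    IsMinimalSet F (Set.univ ×ˢ Mhat) ∧
    (∀ M' : Set (T1 × T1), IsMinimalSet F M' → M' = Set.univ ×ˢ Mhat) ∧
    ¬ Pinched (Set.univ ×ˢ Mhat : Set (T1 × T1)) ∧
    (∀ θ : T1, {x : T1 | (θ, x) ∈ (Set.univ ×ˢ Mhat : Set (T1 × T1))} = Mhat) ∧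
    ¬ Mhat.Countable ∧
    (∀ hM : Set.MapsTo F (Set.univ ×ˢ Mhat) (Set.univ ×ˢ Mhat),
      AlmostPeriodicMap (fun p : T1 × T1 => (p.1 + (ρ : T1), p.2 + (β : T1))) ∧
      ∃ hm : ↥(Set.univ ×ˢ Mhat : Set (T1 × T1)) → T1 × T1,
        IsFactorMap (restrictMap hM)
          (fun p : T1 × T1 => (p.1 + (ρ : T1), p.2 + (β : T1))) hm ∧
        AlmostOneOne hm) := by
  obtain ⟨F₀, hF₀, rfl⟩ := hβ
  obtain rfl : F = Prod.map (· + (ρ : T1)) f₀ := hF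
  have hf₀ : ⇑f₀ = inducedCircleMap F₀ := eq_inducedCircleMap_iff.2 hF₀
  obtain ⟨h, hh, hone⟩ := exists_isFactorMap_add_translationNumber (hf₀ ▸ f₀.bijective)
    (irrational_of_linearIndependent_cons hindep 1)
  rw [← hf₀] at hh
  replace hMmin := (isMinimalSet_iff_minimal f₀.continuous).1 hMmin
  have hdense := denseRange_nsmul_coe_prod hindep
  have hleast := isLeast_closedInvariantSets_univ_prod (add_right_surjective (ρ : T1)) hh
    hone.nonempty (isLeast_closedInvariantSets_add_right hdense) hMmin
  have hiff (M' : Set (T1 × T1)) :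
      IsMinimalSet (Prod.map (· + (ρ : T1)) f₀) M' ↔ M' = univ ×ˢ Mhat := by
    rw [isMinimalSet_iff_minimal (by fun_prop), hleast.minimal_iff]
  have himage : h '' Mhat = univ := hh.image_eq_univ (isLeast_closedInvariantSets_add_right
    (Prod.snd_surjective.denseRange.comp hdense continuous_snd)) hMmin.prop
  have himage' : Prod.map id h '' (univ ×ˢ Mhat : Set (T1 × T1)) = univ := by
    rw [prodMap_image_prod, image_id, himage, univ_prod_univ]
  have hunc : ¬ Mhat.Countable := fun hc ↦ not_countable_univ (himage ▸ hc.image h)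
  refine ⟨(hiff _).2 rfl, fun M' ↦ (hiff M').1, ?_, fun θ ↦ by simp, hunc, fun hM ↦
    ⟨almostPeriodicMap_of_isometry (Isometry.of_dist_eq fun p q ↦ by simp [Prod.dist_eq]), _,
      (hh.prodMap_id _).domRestrict hM himage', (hone.prodMap_id T1).domRestrict himage'⟩⟩
  rw [pinched_univ_prod_iff]
  rintro ⟨x, -, hx⟩
  exact hunc ((countable_singleton x).mono hx)

/-- the product of an irrational rotation with a Denjoy-type circle
homeomorphism (with rationally independent rotation numbers) has a unique minimal set
`T¹ × M̂`, which is not pinched but is almost automorphic, with the corresponding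
irrational translation of the torus as an almost periodic almost 1-1 factor. -/
theorem stmt17 (ρ β : ℝ) (hindep : LinearIndependent ℚ ![(1 : ℝ), ρ, β])
    (f₀ : T1 ≃ₜ T1) (hden : DenjoyType f₀)
    (hβ : ∃ F : CircleDeg1Lift, (∀ t : ℝ, ((F t : ℝ) : T1) = f₀ ((t : ℝ) : T1)) ∧
      F.translationNumber = β)
    (Mhat : Set T1) (hMmin : IsMinimalSet (⇑f₀) Mhat)
    (hMuniq : ∀ M' : Set T1, IsMinimalSet (⇑f₀) M' → M' = Mhat)
    (hMperf : Perfect Mhat) (hMtd : IsTotallyDisconnected Mhat)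
    (F : T1 × T1 → T1 × T1) (hF : F = fun p : T1 × T1 => (p.1 + (ρ : T1), f₀ p.2)) :
    IsMinimalSet F (Set.univ ×ˢ Mhat) ∧
    (∀ M' : Set (T1 × T1), IsMinimalSet F M' → M' = Set.univ ×ˢ Mhat) ∧
    ¬ Pinched (Set.univ ×ˢ Mhat : Set (T1 × T1)) ∧
    (∀ θ : T1, {x : T1 | (θ, x) ∈ (Set.univ ×ˢ Mhat : Set (T1 × T1))} = Mhat) ∧
    ¬ Mhat.Countable ∧
    (∀ hM : Set.MapsTo F (Set.univ ×ˢ Mhat) (Set.univ ×ˢ Mhat),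
      AlmostPeriodicMap (fun p : T1 × T1 => (p.1 + (ρ : T1), p.2 + (β : T1))) ∧
      ∃ hm : ↥(Set.univ ×ˢ Mhat : Set (T1 × T1)) → T1 × T1,
        IsFactorMap (restrictMap hM)
          (fun p : T1 × T1 => (p.1 + (ρ : T1), p.2 + (β : T1))) hm ∧
        AlmostOneOne hm) := by
  exact stmt17_general ρ β hindep f₀ hβ Mhat hMmin F hF

end
end
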